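/- For integers n, m ≥ 3, the probability p_{n,m} that a random positive map Φ : 𝕊_n → 𝕊_m is completely positive satisfies (3√3/(2^{10}·7²·√(min(n,m))))^{D_𝓜} < p_{n,m} < (2^{12}·5²·6^{1/2}·10^{2/9}/(3³·√(min(n,m)+1)))^{D_𝓜}, where D_𝓜 = C(n+1,2)·C(m+1,2) − 1. In particular, if min(n,m) ≥ 2^{25}·5⁴·10^{4/9}/3⁵, then p_{n,m} → 0 as max(n,m) → ∞ (for every ε > 0 there is N such that p_{n,m} < ε whenever n, m ≥ 3, min(n,m) ≥ 2^{25}·5⁴·10^{4/9}/3⁵ and max(n,m) ≥ N). -/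

import Mathlib

open MeasureTheory MvPolynomial

noncomputable section

namespace BiformPaper

/-- The weight function on the variables: the `x`-variables get weight `(1,0)` and the
`y`-variables get weight `(0,1)`. -/
def bw (n m : ℕ) : Fin n ⊕ Fin m → ℕ × ℕ := Sum.elim (fun _ => (1, 0)) (fun _ => (0, 1))

/-- The set of biforms of bidegree `(k₁, k₂)`: real polynomials in
`x = (x₁, …, xₙ)` and `y = (y₁, …, y_m)`, homogeneous of degree `k₁` in `x` and of degree
`k₂` in `y`. -/
def Biform (n m k₁ k₂ : ℕ) : Set (MvPolynomial (Fin n ⊕ Fin m) ℝ) :=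
  {f | MvPolynomial.IsWeightedHomogeneous (bw n m) f (k₁, k₂)}

/-- Evaluation of a polynomial at a point `(x, y) ∈ ℝⁿ × ℝᵐ`. -/
def beval {n m : ℕ} (f : MvPolynomial (Fin n ⊕ Fin m) ℝ) (x : Fin n → ℝ) (y : Fin m → ℝ) : ℝ :=
  eval (Sum.elim x y) f

/-- The Euclidean unit sphere `S^{n-1}` in `ℝⁿ`. -/
def unitSphere (n : ℕ) : Set (Fin n → ℝ) := {x | ∑ i, x i ^ 2 = 1}

/-- `σ` is the normalized uniform measure on the unit sphere `S^{n-1} ⊆ ℝⁿ`, i.e., the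
unique rotation-invariant Borel probability measure concentrated on the sphere. -/
structure IsSphereMeasure (n : ℕ) (σ : Measure (Fin n → ℝ)) : Prop where
  prob : IsProbabilityMeasure σ
  onSphere : σ (unitSphere n)ᶜ = 0
  invariant : ∀ Q : Matrix (Fin n) (Fin n) ℝ, Q * Q.transpose = 1 → σ.map Q.mulVec = σ

/-- The average `∫_T f dσ` of `f` over `T = S^{n-1} × S^{m-1}` (with `σ` the product of the
normalized sphere measures `σ₁`, `σ₂`). -/
def bavg {n m : ℕ} (σ₁ : Measure (Fin n → ℝ)) (σ₂ : Measure (Fin m → ℝ))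
    (f : MvPolynomial (Fin n ⊕ Fin m) ℝ) : ℝ :=
  ∫ x, ∫ y, beval f x y ∂σ₂ ∂σ₁

/-- The `L²(σ)` inner product `⟨f, g⟩ = ∫_T f·g dσ` on biforms. -/
def bip {n m : ℕ} (σ₁ : Measure (Fin n → ℝ)) (σ₂ : Measure (Fin m → ℝ))
    (f g : MvPolynomial (Fin n ⊕ Fin m) ℝ) : ℝ :=
  ∫ x, ∫ y, beval f x y * beval g x y ∂σ₂ ∂σ₁

/-- The cone `Pos^{(n,m)}_{(2k₁,2k₂)}` of nonnegative biforms of bidegree `(2k₁, 2k₂)`. -/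
def PosSet (n m k₁ k₂ : ℕ) : Set (MvPolynomial (Fin n ⊕ Fin m) ℝ) :=
  {f | f ∈ Biform n m (2 * k₁) (2 * k₂) ∧ ∀ x y, 0 ≤ beval f x y}

/-- The cone `Sq^{(n,m)}_{(2k₁,2k₂)}` of finite sums of squares of biforms of bidegree
`(k₁, k₂)`. -/
def SqSet (n m k₁ k₂ : ℕ) : Set (MvPolynomial (Fin n ⊕ Fin m) ℝ) :=
  {f | ∃ (N : ℕ) (g : Fin N → MvPolynomial (Fin n ⊕ Fin m) ℝ),
      (∀ i, g i ∈ Biform n m k₁ k₂) ∧ f = ∑ i, g i ^ 2}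

/-- The cone `Lf^{(n,m)}_{(2k₁,2k₂)}` of finite sums of products
`ℓᵢ(x)^{2k₁} · ℓ′ᵢ(y)^{2k₂}` of even powers of linear forms. -/
def LfSet (n m k₁ k₂ : ℕ) : Set (MvPolynomial (Fin n ⊕ Fin m) ℝ) :=
  {f | ∃ (N : ℕ) (a : Fin N → Fin n → ℝ) (b : Fin N → Fin m → ℝ),
      f = ∑ r, (∑ i, C (a r i) * X (Sum.inl i)) ^ (2 * k₁) *
               (∑ j, C (b r j) * X (Sum.inr j)) ^ (2 * k₂)}

/-- The biform `q = (x₁² + ⋯ + xₙ²)^{k₁} · (y₁² + ⋯ + y_m²)^{k₂}`. -/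
def qpoly (n m k₁ k₂ : ℕ) : MvPolynomial (Fin n ⊕ Fin m) ℝ :=
  (∑ i : Fin n, X (Sum.inl i) ^ 2) ^ k₁ * (∑ j : Fin m, X (Sum.inr j) ^ 2) ^ k₂

/-- The hyperplane `𝓜` of biforms of bidegree `(2k₁, 2k₂)` with average `0` on `T`. -/
def MSet (n m k₁ k₂ : ℕ) (σ₁ : Measure (Fin n → ℝ)) (σ₂ : Measure (Fin m → ℝ)) :
    Set (MvPolynomial (Fin n ⊕ Fin m) ℝ) :=
  {f | f ∈ Biform n m (2 * k₁) (2 * k₂) ∧ bavg σ₁ σ₂ f = 0}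

/-- The translated section `K̃ = {f ∈ 𝓜 : f + q ∈ K}` of a cone `K`. -/
def tilde (n m k₁ k₂ : ℕ) (σ₁ : Measure (Fin n → ℝ)) (σ₂ : Measure (Fin m → ℝ))
    (K : Set (MvPolynomial (Fin n ⊕ Fin m) ℝ)) : Set (MvPolynomial (Fin n ⊕ Fin m) ℝ) :=
  {f | f ∈ MSet n m k₁ k₂ σ₁ σ₂ ∧ f + qpoly n m k₁ k₂ ∈ K}

/-- The unit ball `B_𝓜` of `𝓜` in the `L²(σ)` norm. -/
def bball (n m k₁ k₂ : ℕ) (σ₁ : Measure (Fin n → ℝ)) (σ₂ : Measure (Fin m → ℝ)) :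
    Set (MvPolynomial (Fin n ⊕ Fin m) ℝ) :=
  {f | f ∈ MSet n m k₁ k₂ σ₁ σ₂ ∧ bip σ₁ σ₂ f f ≤ 1}

/-- `ψ : ℝ^D → Mset` is a unitary isomorphism: an injective linear map with range `Mset`
carrying the standard inner product of `ℝ^D` to the `L²(σ)` inner product.  Volumes of
Borel subsets `E` of `Mset` are computed as the Lebesgue measure of `ψ ⁻¹' E`
(by Lemma 1.1 of the paper this does not depend on the choice of `ψ`). -/
structure IsUnitaryParam (n m D : ℕ) (σ₁ : Measure (Fin n → ℝ)) (σ₂ : Measure (Fin m → ℝ))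
    (Mset : Set (MvPolynomial (Fin n ⊕ Fin m) ℝ))
    (ψ : (Fin D → ℝ) →ₗ[ℝ] MvPolynomial (Fin n ⊕ Fin m) ℝ) : Prop where
  inj : Function.Injective ψ
  range : Set.range ψ = Mset
  ip : ∀ a b : Fin D → ℝ, bip σ₁ σ₂ (ψ a) (ψ b) = ∑ i, a i * b i

/-- The apolar inner product `⟨r, s⟩_d = D_r(s)` on biforms, where `D_r` is the
differential operator obtained from `r` by replacing each variable by the corresponding
partial derivative; its value on a pair of forms of the same bidegree is
`∑_α r_α · s_α · α!`. -/
def apolar {n m : ℕ} (r s : MvPolynomial (Fin n ⊕ Fin m) ℝ) : ℝ :=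
  ∑ α ∈ r.support, coeff α r * coeff α s * α.prod fun _ k => (k.factorial : ℝ)

end BiformPaper

/-!
The hyperplane `𝓜` is the space of trace-free symmetric matrices on `ℝⁿ ⊗ ℝᵐ` that are invariant
under both partial transpositions: such a matrix `A` represents `f (x, y) = ⟨x ⊗ y, A (x ⊗ y)⟩`. A
linear parametrisation of `𝓜` only rescales Lebesgue measure, so `p_{n,m}` is a quotient of Haar
volumes of two convex sets of matrices, which are compared with a ball of the Frobenius norm.

Lower volume bounds. The part of the unit ball at height `≥ t` over a hyperplane through the centre
lies in a ball of radius `exp (-t² / 2)`. Hence, given `N` functionals of norm one with `log N`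
small compared with `dim · t²`, at least half of the unit ball lies in all the slabs `|φᵢ| ≤ t`. For
functionals indexed by nets on spheres, a matrix in these slabs has a small form, so a multiple of
half of the unit ball fits into the section.

Upper volume bounds. An element of a section gives Gram matrices `B Bᵀ`: the whole matrix `1 + A` in
the sum-of-squares case, the blocks `Mᵢᵢ + Mⱼⱼ ± 2 Mᵢⱼ` (with a skew choice of signs) in the
positive case. The traces bound the Frobenius norms of the factors. A maximal disjoint packing of
translates of a slab body, on which the operator norm is small, covers a ball of factors by
`2 · 2 ^ dim` translates of the doubled body. Since `‖B Bᵀ - C Cᵀ‖` is controlled by the operator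
norm of `B - C`, the section is covered by that many small Frobenius balls.
-/

namespace BiformPaper

section Packing

open Pointwise Set Metric

theorem exists_finset_card_mul_measure_le_of_vadd_subset {E : Type*} [NormedAddCommGroup E]
    [MeasurableSpace E] [BorelSpace E] (μ : Measure E) [μ.IsAddHaarMeasure] {α : Type*}
    (S : Set α) (b : α → E) {U W : Set E}
    (hU : MeasurableSet U) (hU₀ : μ U ≠ 0) (hW : μ W ≠ ⊤) (hbU : ∀ s ∈ S, b s +ᵥ U ⊆ W) :
    ∃ T : Finset α, ↑T ⊆ S ∧ T.card * μ U ≤ μ W ∧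
      ∀ s ∈ S, ∃ t ∈ T, ((b s +ᵥ U) ∩ (b t +ᵥ U)).Nonempty := by
  obtain ⟨T, hTS, hdisj, hmeet⟩ := Vitali.exists_disjoint_subfamily_covering_enlargement
    (fun s => b s +ᵥ U) S 0 2 one_lt_two (fun _ _ => le_rfl) 0 (fun _ _ => le_rfl)
    fun _ _ => (nonempty_of_measure_ne_zero hU₀).vadd_set
  have hcard : T.encard * μ U ≤ μ W := calc
    T.encard * μ U = ∑' t : T, μ (b t +ᵥ U) := by simp only [measure_vadd, ENNReal.tsum_set_const]
    _ ≤ μ (⋃ t : T, b t +ᵥ U) := tsum_meas_le_meas_iUnion_of_disjoint μ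
        (fun t => hU.const_vadd (b t))
        fun s t hst => hdisj s.2 t.2 (Subtype.coe_injective.ne hst)
    _ ≤ μ W := measure_mono (iUnion_subset fun t => hbU t (hTS t.2))
  have hT : T.Finite := by
    by_contra hT
    rw [Set.Infinite.encard_eq hT, ENat.toENNReal_top, ENNReal.top_mul hU₀] at hcard
    exact hW (top_le_iff.1 hcard)
  refine ⟨hT.toFinset, by simpa using hTS, ?_, fun s hs => ?_⟩
  · rwa [hT.encard_eq_coe_toFinset_card] at hcard
  · obtain ⟨t, ht, hst, -⟩ := hmeet s hs
    exact ⟨t, hT.mem_toFinset.2 ht, hst⟩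

theorem exists_net_closedBall (E : Type*) [NormedAddCommGroup E] [NormedSpace ℝ E]
    [FiniteDimensional ℝ E] {ε : ℝ} (hε : 0 < ε) :
    ∃ N : Finset E, (∀ p ∈ N, ‖p‖ ≤ 1) ∧ (N.card : ℝ) ≤ (1 + 2 / ε) ^ Module.finrank ℝ E ∧
      ∀ x : E, ‖x‖ ≤ 1 → ∃ p ∈ N, ‖x - p‖ ≤ ε := by
  borelize E
  let μ : Measure E := Measure.addHaar
  set d := Module.finrank ℝ E
  obtain ⟨N, hN, hcard, hmeet⟩ := exists_finset_card_mul_measure_le_of_vadd_subset μ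
    (closedBall (0 : E) 1) id (U := closedBall 0 (ε / 2)) (W := closedBall 0 (1 + ε / 2))
    measurableSet_closedBall (measure_closedBall_pos μ 0 (half_pos hε)).ne'
    measure_closedBall_lt_top.ne fun s hs => by
      rw [id, vadd_closedBall, vadd_eq_add, add_zero]
      exact closedBall_subset_closedBall' (by rw [mem_closedBall] at hs; linarith)
  refine ⟨N, fun p hp => mem_closedBall_zero_iff.1 (hN hp), ?_, fun x hx => ?_⟩
  · rw [Measure.addHaar_closedBall μ 0 (by positivity),
      Measure.addHaar_closedBall μ 0 (by positivity), ← mul_assoc,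
      ENNReal.mul_le_mul_iff_left (measure_ball_pos μ 0 one_pos).ne' measure_ball_lt_top.ne,
      ← ENNReal.ofReal_natCast, ← ENNReal.ofReal_mul (by positivity),
      ENNReal.ofReal_le_ofReal_iff (by positivity), ← le_div_iff₀ (by positivity),
      ← div_pow] at hcard
    refine hcard.trans_eq ?_
    congr 1
    field_simp
    ring
  · obtain ⟨p, hp, z, hzx, hzp⟩ := hmeet x (mem_closedBall_zero_iff.2 hx)
    simp only [id, vadd_closedBall, vadd_eq_add, add_zero, mem_closedBall] at hzx hzp
    refine ⟨p, hp, ?_⟩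
    rw [← dist_eq_norm]
    linarith [dist_triangle_left x p z]

end Packing

section Nets

variable {E F : Type*} [NormedAddCommGroup E] [NormedSpace ℝ E] [FiniteDimensional ℝ E]
  [NormedAddCommGroup F] [NormedSpace ℝ F] [FiniteDimensional ℝ F]

theorem abs_apply_le_of_net {N : Set E} {ε : ℝ} (hε : ε < 1)
    (hN : ∀ x : E, ‖x‖ ≤ 1 → ∃ p ∈ N, ‖x - p‖ ≤ ε) (φ : E →ₗ[ℝ] ℝ) {c : ℝ}
    (hc : ∀ p ∈ N, |φ p| ≤ c) (x : E) : |φ x| ≤ c / (1 - ε) * ‖x‖ := by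
  set f : E →L[ℝ] ℝ := φ.toContinuousLinearMap
  obtain ⟨p₀, hp₀, hp₀ε⟩ := hN 0 (by simp)
  have hε₀ : 0 ≤ ε := (norm_nonneg _).trans hp₀ε
  have hc₀ : 0 ≤ c := (abs_nonneg _).trans (hc p₀ hp₀)
  have hnorm : ‖f‖ ≤ c + ‖f‖ * ε := by
    refine f.opNorm_le_of_unit_norm (by positivity) fun z hz => ?_
    obtain ⟨p, hp, hzp⟩ := hN z hz.le
    calc ‖f z‖ = ‖f p + f (z - p)‖ := by rw [← map_add, add_sub_cancel]
      _ ≤ ‖f p‖ + ‖f (z - p)‖ := norm_add_le _ _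
      _ ≤ c + ‖f‖ * ε := add_le_add (hc p hp) (f.le_opNorm_of_le hzp)
  have hf : ‖f‖ ≤ c / (1 - ε) := by
    rw [le_div_iff₀ (by linarith)]
    linarith
  exact f.le_of_opNorm_le hf x

theorem abs_apply₂_le_of_net {N : Set E} {N' : Set F} {ε : ℝ} (hε : ε < 1)
    (hN : ∀ x : E, ‖x‖ ≤ 1 → ∃ p ∈ N, ‖x - p‖ ≤ ε)
    (hN' : ∀ y : F, ‖y‖ ≤ 1 → ∃ q ∈ N', ‖y - q‖ ≤ ε) (φ : E →ₗ[ℝ] F →ₗ[ℝ] ℝ) {c : ℝ}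
    (hc : ∀ p ∈ N, ∀ q ∈ N', |φ p q| ≤ c) (x : E) (y : F) :
    |φ x y| ≤ c / (1 - ε) ^ 2 * (‖x‖ * ‖y‖) := calc
  |φ x y| ≤ c / (1 - ε) * ‖y‖ / (1 - ε) * ‖x‖ := abs_apply_le_of_net hε hN (φ.flip y)
    (fun p hp => abs_apply_le_of_net hε hN' (φ p) (hc p hp) y) x
  _ = c / (1 - ε) ^ 2 * (‖x‖ * ‖y‖) := by
    have : 1 - ε ≠ 0 := by linarith
    field_simp

end Nets

section Slabs

open Metric Set Pointwise

variable {E : Type*} [NormedAddCommGroup E] [InnerProductSpace ℝ E]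

theorem cap_subset_closedBall {u : E} (hu : ‖u‖ ≤ 1) {t : ℝ} (ht : 0 ≤ t) :
    {z : E | ‖z‖ ≤ 1 ∧ t ≤ inner ℝ u z} ⊆ closedBall (t • u) (Real.exp (-(t ^ 2 / 2))) := by
  rintro z ⟨hz, htz⟩
  rw [mem_closedBall, dist_eq_norm]
  refine le_of_sq_le_sq ?_ (Real.exp_pos _).le
  have hexp : Real.exp (-(t ^ 2 / 2)) ^ 2 = Real.exp (-t ^ 2) := by
    rw [← Real.exp_nat_mul]
    ring_nf
  have hu_sq : ‖u‖ ^ 2 ≤ 1 := pow_le_one₀ (norm_nonneg u) hu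
  have hz_sq : ‖z‖ ^ 2 ≤ 1 := pow_le_one₀ (norm_nonneg z) hz
  calc ‖z - t • u‖ ^ 2 = ‖z‖ ^ 2 - 2 * (t * inner ℝ u z) + t ^ 2 * ‖u‖ ^ 2 := by
        rw [norm_sub_sq_real, inner_smul_right, real_inner_comm, norm_smul, mul_pow,
          Real.norm_eq_abs, sq_abs]
    _ ≤ 1 - 2 * (t * t) + t ^ 2 * 1 := by gcongr
    _ = -t ^ 2 + 1 := by ring
    _ ≤ Real.exp (-(t ^ 2 / 2)) ^ 2 := hexp ▸ Real.add_one_le_exp _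

variable {Λ : Type*} {φ : Λ → E →ₗ[ℝ] ℝ} {t : ℝ}

/-- The part of the closed unit ball lying in all the slabs `|φ i| ≤ t`: a convex body which has a
large share of the volume of the ball when `t` is not too small, and on which linear functionals
near the `φ i` are much smaller than on the ball. -/
def slabBody (φ : Λ → E →ₗ[ℝ] ℝ) (t : ℝ) : Set E := {z | ‖z‖ ≤ 1 ∧ ∀ i, |φ i z| ≤ t}

theorem closedBall_subset_slabBody_union_caps :
    closedBall (0 : E) 1 ⊆ slabBody φ t ∪
      ⋃ i, ({z : E | ‖z‖ ≤ 1 ∧ t ≤ φ i z} ∪ {z : E | ‖z‖ ≤ 1 ∧ t ≤ (-φ i) z}) := by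
  intro z hz
  rw [mem_closedBall_zero_iff] at hz
  by_cases h : ∀ i, |φ i z| ≤ t
  · exact Or.inl ⟨hz, h⟩
  · push Not at h
    obtain ⟨i, hi⟩ := h
    exact Or.inr (mem_iUnion.2
      ⟨i, (lt_abs.1 hi).imp (fun h => ⟨hz, h.le⟩) fun h => ⟨hz, h.le⟩⟩)

variable [FiniteDimensional ℝ E]

theorem isClosed_slabBody : IsClosed (slabBody φ t) := by
  simp only [slabBody, Set.ofPred_and, Set.ofPred_forall]
  exact (isClosed_le continuous_norm continuous_const).inter <| isClosed_iInter fun i =>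
    isClosed_le (φ i).continuous_of_finiteDimensional.abs continuous_const

variable [MeasurableSpace E] [BorelSpace E] (μ : Measure E) [μ.IsAddHaarMeasure]

theorem measure_cap_le {ψ : E →ₗ[ℝ] ℝ} (hψ : ∀ z, |ψ z| ≤ ‖z‖) (ht : 0 ≤ t) :
    μ {z : E | ‖z‖ ≤ 1 ∧ t ≤ ψ z} ≤
      ENNReal.ofReal (Real.exp (-(Module.finrank ℝ E * t ^ 2 / 2))) * μ (closedBall 0 1) := by
  obtain ⟨u, hu⟩ := (InnerProductSpace.toDual ℝ E).surjective ψ.toContinuousLinearMap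
  have hψu : ∀ z, inner ℝ u z = ψ z := fun z => congrArg (fun f : E →L[ℝ] ℝ => f z) hu
  have hu_norm : ‖u‖ ≤ 1 := by
    rw [← (InnerProductSpace.toDual ℝ E).norm_map u, hu]
    exact ContinuousLinearMap.opNorm_le_bound _ zero_le_one fun z => by
      rw [one_mul]
      exact hψ z
  calc μ {z : E | ‖z‖ ≤ 1 ∧ t ≤ ψ z} ≤ μ (closedBall (t • u) (Real.exp (-(t ^ 2 / 2)))) := by
        simp only [← hψu]
        exact measure_mono (cap_subset_closedBall hu_norm ht)
    _ = _ := by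
        rw [Measure.addHaar_closedBall' μ _ (Real.exp_pos _).le, ← Real.exp_nat_mul]
        ring_nf

variable [Fintype Λ]

theorem measure_closedBall_le_two_mul_measure_slabBody (hφ : ∀ i z, |φ i z| ≤ ‖z‖) (ht : 0 ≤ t)
    (hcard : 4 * (Fintype.card Λ : ℝ) ≤ Real.exp (Module.finrank ℝ E * t ^ 2 / 2)) :
    μ (closedBall 0 1) ≤ 2 * μ (slabBody φ t) := by
  set e := Real.exp (-(Module.finrank ℝ E * t ^ 2 / 2)) with he
  have hball : μ (closedBall (0 : E) 1) ≠ ⊤ := measure_closedBall_lt_top.ne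
  have hcaps : μ (⋃ i, ({z : E | ‖z‖ ≤ 1 ∧ t ≤ φ i z} ∪ {z : E | ‖z‖ ≤ 1 ∧ t ≤ (-φ i) z})) ≤
      ENNReal.ofReal (Fintype.card Λ * (2 * e)) * μ (closedBall 0 1) := calc
    _ ≤ ∑ i, μ ({z : E | ‖z‖ ≤ 1 ∧ t ≤ φ i z} ∪ {z : E | ‖z‖ ≤ 1 ∧ t ≤ (-φ i) z}) :=
      measure_iUnion_fintype_le _ _
    _ ≤ ∑ _i : Λ, ENNReal.ofReal (2 * e) * μ (closedBall 0 1) := by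
      gcongr with i
      refine (measure_union_le _ _).trans ?_
      rw [two_mul e, ENNReal.ofReal_add (Real.exp_pos _).le (Real.exp_pos _).le, add_mul]
      exact add_le_add (measure_cap_le μ (hφ i) ht)
        (measure_cap_le μ (fun z => by simpa only [LinearMap.neg_apply, abs_neg] using hφ i z) ht)
    _ = _ := by
      rw [Finset.sum_const, Finset.card_univ, nsmul_eq_mul, ← mul_assoc,
        ENNReal.ofReal_mul (Nat.cast_nonneg _), ENNReal.ofReal_natCast]
  have hhalf : Fintype.card Λ * (2 * e) ≤ 1 / 2 := by
    rw [he, Real.exp_neg, ← div_eq_mul_inv, mul_div_assoc', div_le_iff₀ (Real.exp_pos _)]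
    linarith
  have htotal : μ (closedBall (0 : E) 1) ≤
      μ (slabBody φ t) + ENNReal.ofReal (1 / 2) * μ (closedBall 0 1) := calc
    _ ≤ _ := (measure_mono closedBall_subset_slabBody_union_caps).trans (measure_union_le _ _)
    _ ≤ _ := by
      gcongr
      exact hcaps.trans (by gcongr)
  have hslab : μ (slabBody φ t) ≠ ⊤ :=
    ne_top_of_le_ne_top hball (measure_mono fun z hz => mem_closedBall_zero_iff.2 hz.1)
  rw [← ENNReal.toReal_le_toReal hball (by finiteness), ENNReal.toReal_add hslab (by finiteness),
    ENNReal.toReal_mul, ENNReal.toReal_ofReal one_half_pos.le] at htotal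
  rw [← ENNReal.toReal_le_toReal hball (by finiteness), ENNReal.toReal_mul, ENNReal.toReal_ofNat]
  linarith

theorem ofReal_pow_mul_measure_closedBall_le (hφ : ∀ i z, |φ i z| ≤ ‖z‖) (ht : 0 ≤ t)
    (hcard : 4 * (Fintype.card Λ : ℝ) ≤ Real.exp (Module.finrank ℝ E * t ^ 2 / 2))
    {r : ℝ} (hr : 0 ≤ r) {S : Set E} (hS : ∀ z, (∀ i, |φ i z| ≤ t) → r • z ∈ S) :
    ENNReal.ofReal r ^ Module.finrank ℝ E * μ (closedBall 0 1) ≤ 2 * μ S := calc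
  _ ≤ ENNReal.ofReal r ^ Module.finrank ℝ E * (2 * μ (slabBody φ t)) := by
    gcongr
    exact measure_closedBall_le_two_mul_measure_slabBody μ hφ ht hcard
  _ = 2 * μ (r • slabBody φ t) := by
    rw [Measure.addHaar_smul, abs_of_nonneg (by positivity), ENNReal.ofReal_pow hr]
    ring
  _ ≤ 2 * μ S := by
    gcongr
    rintro _ ⟨z, hz, rfl⟩
    exact hS z hz.2

end Slabs

section Covering

open Metric Set

variable {E : Type*} [NormedAddCommGroup E] [InnerProductSpace ℝ E] [FiniteDimensional ℝ E]
  {Λ : Type*} [Fintype Λ] {φ : Λ → E →ₗ[ℝ] ℝ} {t : ℝ}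

theorem exists_finset_card_le_of_slabs (hφ : ∀ i z, |φ i z| ≤ ‖z‖) (ht : 0 ≤ t)
    (hcard : 4 * (Fintype.card Λ : ℝ) ≤ Real.exp (Module.finrank ℝ E * t ^ 2 / 2))
    {α : Type*} {S : Set α} {b : α → E} (hb : ∀ s ∈ S, ‖b s‖ ≤ 1) :
    ∃ T : Finset α, ↑T ⊆ S ∧ T.card ≤ 2 * 2 ^ Module.finrank ℝ E ∧
      ∀ s ∈ S, ∃ s' ∈ T, ∀ i, |φ i (b s - b s')| ≤ 2 * t := by
  borelize E
  let μ : Measure E := Measure.addHaar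
  have hslab := measure_closedBall_le_two_mul_measure_slabBody μ hφ ht hcard
  have hball : μ (closedBall (0 : E) 1) ≠ 0 := (measure_closedBall_pos μ 0 one_pos).ne'
  obtain ⟨T, hTS, hT, hmeet⟩ := exists_finset_card_mul_measure_le_of_vadd_subset μ S b
    (U := slabBody φ t) (W := closedBall 0 2) isClosed_slabBody.measurableSet
    (fun h => hball (le_bot_iff.1 (by rwa [h, mul_zero] at hslab)))
    measure_closedBall_lt_top.ne (by
      rintro s hs _ ⟨u, hu, rfl⟩
      rw [mem_closedBall_zero_iff]
      change ‖b s + u‖ ≤ 2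
      linarith [norm_add_le (b s) u, hb s hs, hu.1])
  refine ⟨T, hTS, ?_, fun s hs => ?_⟩
  · have hmul : T.card * μ (closedBall 0 1) ≤
        (2 * 2 ^ Module.finrank ℝ E : ℕ) * μ (closedBall 0 1) := calc
      T.card * μ (closedBall 0 1) ≤ T.card * (2 * μ (slabBody φ t)) := by gcongr
      _ = 2 * (T.card * μ (slabBody φ t)) := by ring
      _ ≤ 2 * μ (closedBall 0 2) := by gcongr
      _ = (2 * 2 ^ Module.finrank ℝ E : ℕ) * μ (closedBall 0 1) := by
        rw [Measure.addHaar_closedBall' μ 0 zero_le_two, ENNReal.ofReal_pow zero_le_two,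
          ENNReal.ofReal_ofNat, ← mul_assoc]
        push_cast
        rfl
    rw [ENNReal.mul_le_mul_iff_left hball measure_closedBall_lt_top.ne] at hmul
    exact_mod_cast hmul
  · obtain ⟨s', hs', _, ⟨u, hu, rfl⟩, ⟨u', hu', h⟩⟩ := hmeet s hs
    refine ⟨s', hs', fun i => ?_⟩
    have hdiff : b s - b s' = u' - u := by
      simp only [vadd_eq_add] at h
      rw [sub_eq_sub_iff_add_eq_add, ← h, add_comm]
    rw [hdiff, map_sub]
    linarith [abs_sub (φ i u') (φ i u), hu.2 i, hu'.2 i]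

variable {G : Type*} [NormedAddCommGroup G] [NormedSpace ℝ G] [FiniteDimensional ℝ G]
  [MeasurableSpace G] [BorelSpace G]

theorem measure_le_of_slabs (ν : Measure G) [ν.IsAddHaarMeasure] (hφ : ∀ i z, |φ i z| ≤ ‖z‖)
    (ht : 0 ≤ t) (hcard : 4 * (Fintype.card Λ : ℝ) ≤ Real.exp (Module.finrank ℝ E * t ^ 2 / 2))
    {S : Set G} {b : G → E} (hb : ∀ s ∈ S, ‖b s‖ ≤ 1) {r : ℝ} (hr : 0 ≤ r)
    (hS : ∀ s ∈ S, ∀ s' ∈ S, (∀ i, |φ i (b s - b s')| ≤ 2 * t) → ‖s - s'‖ ≤ r) :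
    ν S ≤ 2 * 2 ^ Module.finrank ℝ E *
      (ENNReal.ofReal r ^ Module.finrank ℝ G * ν (closedBall 0 1)) := by
  obtain ⟨T, hTS, hT, hcover⟩ := exists_finset_card_le_of_slabs hφ ht hcard hb
  have hsub : S ⊆ ⋃ s' ∈ T, closedBall s' r := fun s hs => by
    obtain ⟨s', hs', hss'⟩ := hcover s hs
    exact mem_iUnion₂.2 ⟨s', hs', mem_closedBall_iff_norm.2 (hS s hs s' (hTS hs') hss')⟩
  calc ν S ≤ ∑ s' ∈ T, ν (closedBall s' r) :=
        (measure_mono hsub).trans (measure_biUnion_finset_le T _)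
    _ = T.card * (ENNReal.ofReal r ^ Module.finrank ℝ G * ν (closedBall 0 1)) := by
        simp only [Measure.addHaar_closedBall' ν _ hr, ENNReal.ofReal_pow hr, Finset.sum_const,
          nsmul_eq_mul]
    _ ≤ _ := by
        gcongr
        exact_mod_cast hT

end Covering

section Frobenius

open Matrix
open scoped Matrix.Norms.Frobenius

variable {κ κ' : Type*} [Fintype κ] [Fintype κ']

theorem frobenius_norm_sq (M : Matrix κ κ' ℝ) : ‖M‖ ^ 2 = ∑ i, ∑ j, M i j ^ 2 := by
  rw [frobenius_norm_def, ← Real.sqrt_eq_rpow, Real.sq_sqrt (by positivity)]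
  simp only [Real.rpow_two, Real.norm_eq_abs, sq_abs]

/-- The functional `M ↦ xᵀ M y` on matrices. -/
def entryAlong (x : EuclideanSpace ℝ κ) (y : EuclideanSpace ℝ κ') : Matrix κ κ' ℝ →ₗ[ℝ] ℝ where
  toFun M := x.ofLp ⬝ᵥ M *ᵥ y.ofLp
  map_add' M N := by rw [add_mulVec, dotProduct_add]
  map_smul' c M := by rw [smul_mulVec, dotProduct_smul, RingHom.id_apply]

theorem entryAlong_apply (x : EuclideanSpace ℝ κ) (y : EuclideanSpace ℝ κ') (M : Matrix κ κ' ℝ) :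
    entryAlong x y M = x.ofLp ⬝ᵥ M *ᵥ y.ofLp := rfl

theorem abs_entryAlong_le (x : EuclideanSpace ℝ κ) (y : EuclideanSpace ℝ κ') (M : Matrix κ κ' ℝ) :
    |entryAlong x y M| ≤ ‖x‖ * ‖y‖ * ‖M‖ := by
  refine abs_le_of_sq_le_sq ?_ (by positivity)
  have hmulVec : ∑ i, (M *ᵥ y.ofLp) i ^ 2 ≤ ‖M‖ ^ 2 * ‖y‖ ^ 2 := by
    rw [frobenius_norm_sq, EuclideanSpace.real_norm_sq_eq, Finset.sum_mul]
    exact Finset.sum_le_sum fun i _ => Finset.sum_mul_sq_le_sq_mul_sq _ _ _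
  calc entryAlong x y M ^ 2 ≤ (∑ i, x i ^ 2) * ∑ i, (M *ᵥ y.ofLp) i ^ 2 :=
        Finset.sum_mul_sq_le_sq_mul_sq _ _ _
    _ ≤ ‖x‖ ^ 2 * (‖M‖ ^ 2 * ‖y‖ ^ 2) := by
        rw [← EuclideanSpace.real_norm_sq_eq]
        gcongr
    _ = (‖x‖ * ‖y‖ * ‖M‖) ^ 2 := by ring

/-- The bilinear form `(x, y) ↦ xᵀ M y`. -/
def bilinFormOf (M : Matrix κ κ' ℝ) : EuclideanSpace ℝ κ →ₗ[ℝ] EuclideanSpace ℝ κ' →ₗ[ℝ] ℝ :=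
  LinearMap.mk₂ ℝ (fun x y => entryAlong x y M) (fun _ _ _ => add_dotProduct _ _ _)
    (fun a x y => smul_dotProduct a x.ofLp (M *ᵥ y.ofLp))
    (fun _ _ _ => by simp only [entryAlong_apply, WithLp.ofLp_add, mulVec_add, dotProduct_add])
    (fun _ _ _ => by simp only [entryAlong_apply, WithLp.ofLp_smul, mulVec_smul, dotProduct_smul])

theorem bilinFormOf_apply (M : Matrix κ κ' ℝ) (x : EuclideanSpace ℝ κ) (y : EuclideanSpace ℝ κ') :
    bilinFormOf M x y = entryAlong x y M := rfl

theorem exists_functionals_controlling_entryAlong.{u, v} (κ : Type u) (κ' : Type v) [Fintype κ]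
    [Fintype κ'] : ∃ (Λ : Type (max u v)) (_ : Fintype Λ) (φ : Λ → Matrix κ κ' ℝ →ₗ[ℝ] ℝ),
      (Fintype.card Λ : ℝ) ≤ 9 ^ (Fintype.card κ + Fintype.card κ') ∧
      (∀ i M, |φ i M| ≤ ‖M‖) ∧
      ∀ M c, (∀ i, |φ i M| ≤ c) → ∀ x y, |entryAlong x y M| ≤ 16 / 9 * c * (‖x‖ * ‖y‖) := by
  obtain ⟨N, hN₁, hNcard, hN⟩ :=
    exists_net_closedBall (EuclideanSpace ℝ κ) (ε := 1 / 4) (by norm_num)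
  obtain ⟨N', hN'₁, hN'card, hN'⟩ :=
    exists_net_closedBall (EuclideanSpace ℝ κ') (ε := 1 / 4) (by norm_num)
  refine ⟨N × N', inferInstance, fun i => entryAlong i.1.1 i.2.1, ?_,
    fun ⟨⟨p, hp⟩, ⟨q, hq⟩⟩ M => ?_, fun M c hc x y => ?_⟩
  · rw [finrank_euclideanSpace, show (1 + 2 / (1 / 4) : ℝ) = 9 by norm_num] at hNcard hN'card
    rw [Fintype.card_prod, Fintype.card_coe, Fintype.card_coe, Nat.cast_mul, pow_add]
    gcongr
  · calc _ ≤ ‖p‖ * ‖q‖ * ‖M‖ := abs_entryAlong_le _ _ _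
      _ ≤ 1 * 1 * ‖M‖ := by
        gcongr
        exacts [hN₁ p hp, hN'₁ q hq]
      _ = ‖M‖ := by rw [one_mul, one_mul]
  · exact (abs_apply₂_le_of_net (by norm_num) hN hN' (bilinFormOf M)
      (fun p hp q hq => hc ⟨⟨p, hp⟩, ⟨q, hq⟩⟩) x y).trans_eq (by ring)

theorem norm_mulVec_le_of_entryAlong_le {M : Matrix κ κ' ℝ} {c : ℝ}
    (hM : ∀ x y, |entryAlong x y M| ≤ c * (‖x‖ * ‖y‖)) (hc : 0 ≤ c) (v : EuclideanSpace ℝ κ') :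
    ‖WithLp.toLp 2 (M *ᵥ v.ofLp)‖ ≤ c * ‖v‖ := by
  set w := WithLp.toLp 2 (M *ᵥ v.ofLp)
  have hw : entryAlong w v M = ‖w‖ ^ 2 := by
    rw [entryAlong_apply, EuclideanSpace.real_norm_sq_eq, dotProduct]
    simp only [w, sq]
  have hsq : ‖w‖ * ‖w‖ ≤ c * ‖v‖ * ‖w‖ := by
    linarith [le_of_abs_le (hM w v)]
  rcases (norm_nonneg w).eq_or_lt with h | h
  · rw [← h]
    positivity
  · exact le_of_mul_le_mul_right hsq h

theorem frobenius_norm_mul_le_of_entryAlong_le {κ'' : Type*} [Fintype κ''] {M : Matrix κ κ' ℝ}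
    {c : ℝ} (hM : ∀ x y, |entryAlong x y M| ≤ c * (‖x‖ * ‖y‖)) (hc : 0 ≤ c)
    (A : Matrix κ' κ'' ℝ) : ‖M * A‖ ≤ c * ‖A‖ := by
  refine le_of_sq_le_sq ?_ (by positivity)
  rw [← frobenius_norm_transpose, ← frobenius_norm_transpose A, mul_pow, frobenius_norm_sq,
    frobenius_norm_sq, Finset.mul_sum]
  refine Finset.sum_le_sum fun j _ => ?_
  have hcol := pow_le_pow_left₀ (norm_nonneg _)
    (norm_mulVec_le_of_entryAlong_le hM hc (WithLp.toLp 2 (Aᵀ j))) 2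
  rwa [mul_pow, EuclideanSpace.real_norm_sq_eq, EuclideanSpace.real_norm_sq_eq] at hcol

theorem frobenius_norm_mul_transpose_sub_le {B C : Matrix κ κ ℝ} {c : ℝ}
    (hBC : ∀ x y, |entryAlong x y (B - C)| ≤ c * (‖x‖ * ‖y‖)) (hc : 0 ≤ c) :
    ‖B * Bᵀ - C * Cᵀ‖ ≤ c * (‖B‖ + ‖C‖) := calc
  ‖B * Bᵀ - C * Cᵀ‖ = ‖(B - C) * Bᵀ + ((B - C) * Cᵀ)ᵀ‖ := by
    rw [transpose_mul, transpose_transpose, transpose_sub, sub_mul, mul_sub, sub_add_sub_cancel]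
  _ ≤ ‖(B - C) * Bᵀ‖ + ‖(B - C) * Cᵀ‖ :=
    (norm_add_le _ _).trans_eq (by rw [frobenius_norm_transpose])
  _ ≤ c * ‖Bᵀ‖ + c * ‖Cᵀ‖ := add_le_add (frobenius_norm_mul_le_of_entryAlong_le hBC hc _)
    (frobenius_norm_mul_le_of_entryAlong_le hBC hc _)
  _ = c * (‖B‖ + ‖C‖) := by rw [frobenius_norm_transpose, frobenius_norm_transpose, mul_add]

end Frobenius

section Gram

open Matrix Metric
open scoped Matrix.Norms.Frobenius

variable {β κ : Type*} [Fintype β] [Fintype κ]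

/-- The matrix in position `k` of a family of matrices stored as one Euclidean vector. -/
def block (k : β) : EuclideanSpace ℝ (β × κ × κ) →ₗ[ℝ] Matrix κ κ ℝ where
  toFun z := .of fun i j => z (k, i, j)
  map_add' _ _ := rfl
  map_smul' _ _ := rfl

theorem norm_sq_eq_sum_norm_block_sq (z : EuclideanSpace ℝ (β × κ × κ)) :
    ‖z‖ ^ 2 = ∑ k, ‖block k z‖ ^ 2 := by
  simp only [EuclideanSpace.real_norm_sq_eq, Fintype.sum_prod_type, frobenius_norm_sq]
  rfl

theorem norm_block_le (k : β) (z : EuclideanSpace ℝ (β × κ × κ)) : ‖block k z‖ ≤ ‖z‖ := by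
  refine le_of_sq_le_sq ?_ (norm_nonneg z)
  rw [norm_sq_eq_sum_norm_block_sq z]
  exact Finset.single_le_sum (f := fun k => ‖block k z‖ ^ 2) (fun _ _ => sq_nonneg _)
    (Finset.mem_univ k)

theorem sum_norm_mul_transpose_sub_sq_le {B C : β → Matrix κ κ ℝ} {R c : ℝ}
    (hB : ∑ k, ‖B k‖ ^ 2 ≤ R) (hC : ∑ k, ‖C k‖ ^ 2 ≤ R) (hc : 0 ≤ c)
    (hBC : ∀ k x y, |entryAlong x y (B k - C k)| ≤ c * (‖x‖ * ‖y‖)) :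
    ∑ k, ‖B k * (B k)ᵀ - C k * (C k)ᵀ‖ ^ 2 ≤ 4 * c ^ 2 * R := calc
  _ ≤ ∑ k, c ^ 2 * (2 * (‖B k‖ ^ 2 + ‖C k‖ ^ 2)) := by
    gcongr with k
    calc _ ≤ (c * (‖B k‖ + ‖C k‖)) ^ 2 := by
          gcongr
          exact frobenius_norm_mul_transpose_sub_le (hBC k) hc
      _ ≤ _ := by
          rw [mul_pow]
          gcongr
          exact add_sq_le
  _ = 2 * c ^ 2 * (∑ k, ‖B k‖ ^ 2 + ∑ k, ‖C k‖ ^ 2) := by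
    rw [← Finset.mul_sum, ← Finset.mul_sum, Finset.sum_add_distrib]
    ring
  _ ≤ 2 * c ^ 2 * (R + R) := by gcongr
  _ = 4 * c ^ 2 * R := by ring

variable {G : Type*} [NormedAddCommGroup G] [NormedSpace ℝ G] [FiniteDimensional ℝ G]
  [MeasurableSpace G] [BorelSpace G]

theorem measure_le_of_gram (ν : Measure G) [ν.IsAddHaarMeasure] {t : ℝ} (ht : 0 ≤ t)
    (hcard : 4 * (Fintype.card β * 81 ^ Fintype.card κ : ℝ) ≤
      Real.exp ((Fintype.card β * Fintype.card κ ^ 2 : ℕ) * t ^ 2 / 2))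
    {S : Set G} {B : G → β → Matrix κ κ ℝ} {R K : ℝ} (hR : 0 < R) (hK : 0 ≤ K)
    (hB : ∀ s ∈ S, ∑ k, ‖B s k‖ ^ 2 ≤ R)
    (hS : ∀ s ∈ S, ∀ s' ∈ S, ‖s - s'‖ ^ 2 ≤
      K ^ 2 * ∑ k, ‖B s k * (B s k)ᵀ - B s' k * (B s' k)ᵀ‖ ^ 2) :
    ν S ≤ 2 * 2 ^ (Fintype.card β * Fintype.card κ ^ 2) *
      (ENNReal.ofReal (64 / 9 * K * R * t) ^ Module.finrank ℝ G * ν (closedBall 0 1)) := by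
  obtain ⟨Λ, _, φ, hφcard, hφ, hform⟩ := exists_functionals_controlling_entryAlong κ κ
  let b : G → EuclideanSpace ℝ (β × κ × κ) := fun s =>
    (√R)⁻¹ • WithLp.toLp 2 fun p => B s p.1 p.2.1 p.2.2
  have hblock : ∀ s k, block k (b s) = (√R)⁻¹ • B s k := fun s k => rfl
  have hfinrank : Module.finrank ℝ (EuclideanSpace ℝ (β × κ × κ)) =
      Fintype.card β * Fintype.card κ ^ 2 := by
    simp only [finrank_euclideanSpace, Fintype.card_prod, sq]
  have hcard' : (Fintype.card (β × Λ) : ℝ) ≤ Fintype.card β * 81 ^ Fintype.card κ := by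
    rw [Fintype.card_prod, Nat.cast_mul, show (81 : ℝ) = 9 ^ 2 by norm_num, ← pow_mul, two_mul]
    gcongr
  rw [← hfinrank] at hcard ⊢
  refine measure_le_of_slabs ν (φ := fun i : β × Λ => (φ i.2).comp (block i.1))
    (fun i z => (hφ _ _).trans (norm_block_le _ z)) ht (hcard.trans' (by gcongr)) (b := b)
    (fun s hs => ?_) (by positivity) fun s hs s' hs' h => ?_
  · refine le_of_sq_le_sq ?_ zero_le_one
    simp only [norm_sq_eq_sum_norm_block_sq, hblock, norm_smul, mul_pow, norm_inv, inv_pow,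
      Real.norm_eq_abs, sq_abs, Real.sq_sqrt hR.le, ← Finset.mul_sum]
    rw [one_pow, inv_mul_le_one₀ hR]
    exact hB s hs
  · have hdiff : ∀ k x y, |entryAlong x y (B s k - B s' k)| ≤ 32 / 9 * √R * t * (‖x‖ * ‖y‖) :=
      fun k x y => by
        have hnet := hform (block k (b s - b s')) (2 * t) (fun i => h (k, i)) x y
        rw [map_sub, hblock, hblock, ← smul_sub, map_smul, smul_eq_mul, abs_mul,
          abs_of_nonneg (by positivity), inv_mul_le_iff₀ (Real.sqrt_pos.2 hR)] at hnet
        exact hnet.trans_eq (by ring)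
    refine le_of_sq_le_sq ((hS s hs s' hs').trans ?_) (by positivity)
    calc _ ≤ K ^ 2 * (4 * (32 / 9 * √R * t) ^ 2 * R) := by
          gcongr
          exact sum_norm_mul_transpose_sub_sq_le (hB s hs) (hB s' hs') (by positivity) hdiff
      _ = (64 / 9 * K * R * t) ^ 2 := by
          rw [mul_pow, mul_pow, Real.sq_sqrt hR.le]
          ring

end Gram

section ProductVectors

open Matrix
open scoped Matrix.Norms.Frobenius

variable {ι κ : Type*}

/-- The product vector `x ⊗ y`, with coordinates `xᵢ yⱼ`. -/
def tens : EuclideanSpace ℝ ι →ₗ[ℝ] EuclideanSpace ℝ κ →ₗ[ℝ] EuclideanSpace ℝ (ι × κ) :=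
  LinearMap.mk₂ ℝ (fun x y => WithLp.toLp 2 fun p => x p.1 * y p.2)
    (fun _ _ _ => PiLp.ext fun _ => add_mul _ _ _) (fun _ _ _ => PiLp.ext fun _ => mul_assoc _ _ _)
    (fun _ _ _ => PiLp.ext fun _ => mul_add _ _ _)
    (fun _ _ _ => PiLp.ext fun _ => mul_left_comm _ _ _)

theorem tens_apply (x : EuclideanSpace ℝ ι) (y : EuclideanSpace ℝ κ) (p : ι × κ) :
    tens x y p = x p.1 * y p.2 := rfl

theorem tens_single [DecidableEq ι] [DecidableEq κ] (i : ι) (k : κ) :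
    tens (EuclideanSpace.single i 1) (EuclideanSpace.single k 1) =
      EuclideanSpace.single (i, k) (1 : ℝ) := by
  ext p
  simp [tens_apply, ← ite_and, Prod.ext_iff, and_comm]

variable [Fintype ι] [Fintype κ]

theorem entryAlong_single [DecidableEq κ] (i j : κ) (M : Matrix κ κ ℝ) :
    entryAlong (EuclideanSpace.single i 1) (EuclideanSpace.single j 1) M = M i j := by
  rw [entryAlong_apply, PiLp.ofLp_single, PiLp.ofLp_single, mulVec_single_one,
    single_one_dotProduct, col_apply]

theorem norm_tens (x : EuclideanSpace ℝ ι) (y : EuclideanSpace ℝ κ) :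
    ‖tens x y‖ = ‖x‖ * ‖y‖ := by
  rw [← sq_eq_sq₀ (norm_nonneg _) (by positivity), mul_pow]
  simp only [EuclideanSpace.real_norm_sq_eq, Fintype.sum_prod_type, tens_apply, mul_pow,
    Finset.sum_mul_sum]

/-- The biquadratic form `(x ⊗ y)ᵀ M (x ⊗ y)`. -/
def biquadForm (x : EuclideanSpace ℝ ι) (y : EuclideanSpace ℝ κ) :
    Matrix (ι × κ) (ι × κ) ℝ →ₗ[ℝ] ℝ :=
  entryAlong (tens x y) (tens x y)

theorem biquadForm_apply (x : EuclideanSpace ℝ ι) (y : EuclideanSpace ℝ κ)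
    (M : Matrix (ι × κ) (ι × κ) ℝ) :
    biquadForm x y M = ∑ p, ∑ q, x p.1 * y p.2 * M p q * (x q.1 * y q.2) := by
  simp only [biquadForm, entryAlong_apply, dotProduct, mulVec, tens_apply, Finset.mul_sum,
    mul_assoc]

theorem entryAlong_one [DecidableEq κ] (x y : EuclideanSpace ℝ κ) :
    entryAlong x y 1 = inner ℝ x y := by
  rw [entryAlong_apply, one_mulVec, EuclideanSpace.inner_eq_star_dotProduct, star_trivial,
    dotProduct_comm]

theorem biquadForm_one [DecidableEq ι] [DecidableEq κ] (x : EuclideanSpace ℝ ι)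
    (y : EuclideanSpace ℝ κ) : biquadForm x y 1 = ‖x‖ ^ 2 * ‖y‖ ^ 2 := by
  rw [biquadForm, entryAlong_one, real_inner_self_eq_norm_sq, norm_tens, mul_pow]

theorem abs_entryAlong_tens_le_of_net {N : Set (EuclideanSpace ℝ ι)} {N' : Set (EuclideanSpace ℝ κ)}
    {ε : ℝ} (hε : ε < 1) (hN : ∀ x, ‖x‖ ≤ 1 → ∃ p ∈ N, ‖x - p‖ ≤ ε)
    (hN' : ∀ y, ‖y‖ ≤ 1 → ∃ q ∈ N', ‖y - q‖ ≤ ε) {M : Matrix (ι × κ) (ι × κ) ℝ} {c : ℝ}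
    (hc : ∀ p ∈ N, ∀ p' ∈ N, ∀ q ∈ N', ∀ q' ∈ N', |entryAlong (tens p q) (tens p' q') M| ≤ c)
    (x x' : EuclideanSpace ℝ ι) (y y' : EuclideanSpace ℝ κ) :
    |entryAlong (tens x y) (tens x' y') M| ≤
      c / (1 - ε) ^ 4 * (‖x‖ * ‖x'‖ * (‖y‖ * ‖y'‖)) := by
  have hx : ∀ q ∈ N', ∀ q' ∈ N', |entryAlong (tens x q) (tens x' q') M| ≤
      c / (1 - ε) ^ 2 * (‖x‖ * ‖x'‖) := fun q hq q' hq' =>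
    abs_apply₂_le_of_net hε hN hN ((bilinFormOf M).compl₁₂ (tens.flip q) (tens.flip q'))
      (fun p hp p' hp' => hc p hp p' hp' q hq q' hq') x x'
  refine (abs_apply₂_le_of_net hε hN' hN' ((bilinFormOf M).compl₁₂ (tens x) (tens x'))
    hx y y').trans_eq ?_
  have : 1 - ε ≠ 0 := by linarith
  field_simp

theorem exists_functionals_controlling_biquadForm.{u, v} (ι : Type u) (κ : Type v) [Fintype ι]
    [Fintype κ] : ∃ (Λ : Type (max u v)) (_ : Fintype Λ)
      (φ : Λ → Matrix (ι × κ) (ι × κ) ℝ →ₗ[ℝ] ℝ),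
      (Fintype.card Λ : ℝ) ≤ 81 ^ (Fintype.card ι + Fintype.card κ) ∧
      (∀ i M, |φ i M| ≤ ‖M‖) ∧ ∀ M c, (∀ i, |φ i M| ≤ c) → ∀ x y,
        |biquadForm x y M| ≤ 256 / 81 * c * (‖x‖ ^ 2 * ‖y‖ ^ 2) := by
  obtain ⟨N, hN₁, hNcard, hN⟩ :=
    exists_net_closedBall (EuclideanSpace ℝ ι) (ε := 1 / 4) (by norm_num)
  obtain ⟨N', hN'₁, hN'card, hN'⟩ :=
    exists_net_closedBall (EuclideanSpace ℝ κ) (ε := 1 / 4) (by norm_num)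
  refine ⟨(N × N') × (N × N'), inferInstance,
    fun i => entryAlong (tens i.1.1.1 i.1.2.1) (tens i.2.1.1 i.2.2.1), ?_,
    fun ⟨⟨⟨p, hp⟩, ⟨q, hq⟩⟩, ⟨⟨p', hp'⟩, ⟨q', hq'⟩⟩⟩ M => ?_, fun M c hc x y => ?_⟩
  · rw [finrank_euclideanSpace, show (1 + 2 / (1 / 4) : ℝ) = 9 by norm_num] at hNcard hN'card
    have hprod : (N.card * N'.card : ℝ) ≤ 9 ^ (Fintype.card ι + Fintype.card κ) := by
      rw [pow_add]
      gcongr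
    simp only [Fintype.card_prod, Fintype.card_coe, Nat.cast_mul]
    rw [show (81 : ℝ) = 9 * 9 by norm_num, mul_pow]
    gcongr
  · calc _ ≤ ‖p‖ * ‖q‖ * (‖p'‖ * ‖q'‖) * ‖M‖ := by
          rw [← norm_tens, ← norm_tens]
          exact abs_entryAlong_le _ _ _
      _ ≤ 1 * 1 * (1 * 1) * ‖M‖ := by
        gcongr
        exacts [hN₁ p hp, hN'₁ q hq, hN₁ p' hp', hN'₁ q' hq']
      _ = ‖M‖ := by simp only [one_mul]
  · exact (abs_entryAlong_tens_le_of_net (by norm_num) hN hN'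
      (fun p hp p' hp' q hq q' hq' => hc ((⟨p, hp⟩, ⟨q, hq⟩), (⟨p', hp'⟩, ⟨q', hq'⟩)))
      x x y y).trans_eq (by ring)

end ProductVectors

section PartialTranspose

open Matrix
open scoped Matrix.Norms.Frobenius

variable {ι κ : Type*}

/-- Transposition of the second tensor factor of a matrix on `ℝ^ι ⊗ ℝ^κ`. -/
def partialTranspose : Matrix (ι × κ) (ι × κ) ℝ →ₗ[ℝ] Matrix (ι × κ) (ι × κ) ℝ where
  toFun M := .of fun p q => M (p.1, q.2) (q.1, p.2)
  map_add' _ _ := rfl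
  map_smul' _ _ := rfl

theorem partialTranspose_apply (M : Matrix (ι × κ) (ι × κ) ℝ) (p q : ι × κ) :
    partialTranspose M p q = M (p.1, q.2) (q.1, p.2) := rfl

theorem partialTranspose_partialTranspose (M : Matrix (ι × κ) (ι × κ) ℝ) :
    partialTranspose (partialTranspose M) = M := rfl

theorem transpose_partialTranspose (M : Matrix (ι × κ) (ι × κ) ℝ) :
    (partialTranspose M)ᵀ = partialTranspose Mᵀ := rfl

theorem partialTranspose_one [DecidableEq ι] [DecidableEq κ] :
    partialTranspose (1 : Matrix (ι × κ) (ι × κ) ℝ) = 1 := by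
  ext p q
  simp only [partialTranspose_apply, one_apply, Prod.ext_iff, eq_comm]

/-- The matrices on `ℝ^ι ⊗ ℝ^κ` invariant under transposition of either tensor factor. -/
def bisymmetricMatrices (ι κ : Type*) : Submodule ℝ (Matrix (ι × κ) (ι × κ) ℝ) where
  carrier := {M | Mᵀ = M ∧ partialTranspose M = M}
  add_mem' {M N} hM hN := ⟨by rw [transpose_add, hM.1, hN.1], by rw [map_add, hM.2, hN.2]⟩
  zero_mem' := ⟨transpose_zero, map_zero _⟩
  smul_mem' c M hM := ⟨by rw [transpose_smul, hM.1], by rw [map_smul, hM.2]⟩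

theorem one_mem_bisymmetricMatrices [DecidableEq ι] [DecidableEq κ] :
    1 ∈ bisymmetricMatrices ι κ := ⟨transpose_one, partialTranspose_one⟩

/-- The average of a matrix and its partial transpose, a bisymmetric matrix if the given one is
symmetric. -/
def partialSymmetrization : Matrix (ι × κ) (ι × κ) ℝ →ₗ[ℝ] Matrix (ι × κ) (ι × κ) ℝ :=
  (1 / 2 : ℝ) • (LinearMap.id + partialTranspose)

theorem partialSymmetrization_apply (M : Matrix (ι × κ) (ι × κ) ℝ) :
    partialSymmetrization M = (1 / 2 : ℝ) • (M + partialTranspose M) := rfl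

theorem partialSymmetrization_mem_bisymmetricMatrices {M : Matrix (ι × κ) (ι × κ) ℝ} (hM : Mᵀ = M) :
    partialSymmetrization M ∈ bisymmetricMatrices ι κ := by
  constructor
  · rw [partialSymmetrization_apply, transpose_smul, transpose_add, transpose_partialTranspose, hM]
  · rw [partialSymmetrization_apply, map_smul, map_add, partialTranspose_partialTranspose, add_comm]

variable [Fintype ι] [Fintype κ]

theorem trace_partialTranspose (M : Matrix (ι × κ) (ι × κ) ℝ) :
    (partialTranspose M).trace = M.trace := rfl

theorem trace_partialSymmetrization (M : Matrix (ι × κ) (ι × κ) ℝ) :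
    (partialSymmetrization M).trace = M.trace := by
  rw [partialSymmetrization_apply, trace_smul, trace_add, trace_partialTranspose, smul_eq_mul]
  ring

theorem frobenius_norm_partialTranspose (M : Matrix (ι × κ) (ι × κ) ℝ) :
    ‖partialTranspose M‖ = ‖M‖ := by
  rw [← sq_eq_sq₀ (norm_nonneg _) (norm_nonneg _), frobenius_norm_sq, frobenius_norm_sq]
  simp only [Fintype.sum_prod_type, partialTranspose_apply]
  refine Finset.sum_congr rfl fun i _ => ?_
  rw [Finset.sum_comm, Finset.sum_congr rfl fun j _ => Finset.sum_comm, Finset.sum_comm]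

theorem frobenius_norm_partialSymmetrization_le (M : Matrix (ι × κ) (ι × κ) ℝ) :
    ‖partialSymmetrization M‖ ≤ ‖M‖ := by
  rw [partialSymmetrization_apply, norm_smul, Real.norm_of_nonneg one_half_pos.le]
  linarith [norm_add_le M (partialTranspose M), frobenius_norm_partialTranspose M]

theorem entryAlong_transpose (x y : EuclideanSpace ℝ κ) (M : Matrix κ κ ℝ) :
    entryAlong x y Mᵀ = entryAlong y x M := by
  rw [entryAlong_apply, entryAlong_apply, mulVec_transpose, dotProduct_comm, dotProduct_mulVec]

theorem entryAlong_tens_partialTranspose (x x' : EuclideanSpace ℝ ι) (y y' : EuclideanSpace ℝ κ)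
    (M : Matrix (ι × κ) (ι × κ) ℝ) :
    entryAlong (tens x y) (tens x' y') (partialTranspose M) =
      entryAlong (tens x y') (tens x' y) M := by
  simp only [entryAlong_apply, dotProduct, mulVec, tens_apply, Fintype.sum_prod_type,
    partialTranspose_apply, Finset.mul_sum]
  refine Finset.sum_congr rfl fun i _ => ?_
  rw [Finset.sum_comm, Finset.sum_congr rfl fun j _ => Finset.sum_comm, Finset.sum_comm]
  refine Finset.sum_congr rfl fun k _ => Finset.sum_congr rfl fun j _ =>
    Finset.sum_congr rfl fun l _ => by ring

theorem biquadForm_transpose (x : EuclideanSpace ℝ ι) (y : EuclideanSpace ℝ κ)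
    (M : Matrix (ι × κ) (ι × κ) ℝ) : biquadForm x y Mᵀ = biquadForm x y M :=
  entryAlong_transpose _ _ M

theorem biquadForm_partialSymmetrization (x : EuclideanSpace ℝ ι) (y : EuclideanSpace ℝ κ)
    (M : Matrix (ι × κ) (ι × κ) ℝ) : biquadForm x y (partialSymmetrization M) =
      biquadForm x y M := by
  rw [partialSymmetrization_apply, map_smul, map_add, biquadForm, entryAlong_tens_partialTranspose,
    smul_eq_mul]
  ring

theorem apply_eq_zero_of_symm_of_apply_self_eq_zero {E : Type*} [AddCommGroup E] [Module ℝ E]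
    (f : E →ₗ[ℝ] E →ₗ[ℝ] ℝ) (hsymm : ∀ x y, f x y = f y x) (hf : ∀ x, f x x = 0) (x y : E) :
    f x y = 0 := by
  have hxy := hf (x + y)
  simp only [map_add, LinearMap.add_apply, hf, hsymm y x] at hxy
  linarith

theorem eq_zero_of_biquadForm_eq_zero {M : Matrix (ι × κ) (ι × κ) ℝ}
    (hM : M ∈ bisymmetricMatrices ι κ) (h : ∀ x y, biquadForm x y M = 0) : M = 0 := by
  classical
  have hx : ∀ x x' y, entryAlong (tens x y) (tens x' y) M = 0 := fun x x' y =>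
    apply_eq_zero_of_symm_of_apply_self_eq_zero
      ((bilinFormOf M).compl₁₂ (tens.flip y) (tens.flip y))
      (fun x x' => by
        change entryAlong (tens x y) (tens x' y) M = entryAlong (tens x' y) (tens x y) M
        rw [← entryAlong_transpose, hM.1])
      (fun x => h x y) x x'
  have hxy : ∀ x x' y y', entryAlong (tens x y) (tens x' y') M = 0 := fun x x' y y' =>
    apply_eq_zero_of_symm_of_apply_self_eq_zero ((bilinFormOf M).compl₁₂ (tens x) (tens x'))
      (fun y y' => by
        change entryAlong (tens x y) (tens x' y') M = entryAlong (tens x y') (tens x' y) M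
        rw [← entryAlong_tens_partialTranspose, hM.2])
      (fun y => hx x x' y) y y'
  ext p q
  have hpq := hxy (EuclideanSpace.single p.1 1) (EuclideanSpace.single q.1 1)
    (EuclideanSpace.single p.2 1) (EuclideanSpace.single q.2 1)
  rwa [tens_single, tens_single, entryAlong_single] at hpq

theorem eq_partialSymmetrization_of_biquadForm_eq {M N : Matrix (ι × κ) (ι × κ) ℝ}
    (hM : M ∈ bisymmetricMatrices ι κ) (hN : Nᵀ = N)
    (h : ∀ x y, biquadForm x y M = biquadForm x y N) : M = partialSymmetrization N := by
  refine sub_eq_zero.1 <| eq_zero_of_biquadForm_eq_zero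
    (Submodule.sub_mem _ hM (partialSymmetrization_mem_bisymmetricMatrices hN)) fun x y => ?_
  rw [map_sub, h, biquadForm_partialSymmetrization, sub_self]

end PartialTranspose

section ChoiSpace

open Matrix Metric
open scoped Matrix.Norms.Frobenius

/-- Euclidean space on pairs of indices, read as a space of matrices. It supplies the inner product
that the Frobenius norm on `Matrix` lacks. -/
def euclideanToMatrix (κ : Type*) : EuclideanSpace ℝ (κ × κ) ≃ₗ[ℝ] Matrix κ κ ℝ where
  toFun z := .of fun i j => z (i, j)
  invFun M := WithLp.toLp 2 fun p => M p.1 p.2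
  map_add' _ _ := rfl
  map_smul' _ _ := rfl
  left_inv _ := rfl
  right_inv _ := rfl

theorem norm_euclideanToMatrix {κ : Type*} [Fintype κ] (z : EuclideanSpace ℝ (κ × κ)) :
    ‖euclideanToMatrix κ z‖ = ‖z‖ := by
  rw [← sq_eq_sq₀ (norm_nonneg _) (norm_nonneg _), frobenius_norm_sq,
    EuclideanSpace.real_norm_sq_eq, Fintype.sum_prod_type]
  rfl

variable (ι κ : Type*) [Fintype ι] [Fintype κ]

/-- The trace-free bisymmetric matrices, one for each biquadratic form of mean zero. -/
def choiSpace : Submodule ℝ (EuclideanSpace ℝ ((ι × κ) × (ι × κ))) :=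
  (bisymmetricMatrices ι κ ⊓ (traceLinearMap (ι × κ) ℝ ℝ).ker).comap
    (euclideanToMatrix (ι × κ)).toLinearMap

variable {ι κ}

/-- The matrix of an element of `choiSpace`: the Choi matrix of the corresponding linear map. -/
def choi : choiSpace ι κ →ₗ[ℝ] Matrix (ι × κ) (ι × κ) ℝ :=
  (euclideanToMatrix (ι × κ)).toLinearMap.comp (choiSpace ι κ).subtype

theorem choi_mem_bisymmetricMatrices (A : choiSpace ι κ) : choi A ∈ bisymmetricMatrices ι κ :=
  A.2.1

theorem trace_choi (A : choiSpace ι κ) : (choi A).trace = 0 := A.2.2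

theorem norm_choi (A : choiSpace ι κ) : ‖choi A‖ = ‖A‖ := norm_euclideanToMatrix _

variable [DecidableEq ι] [DecidableEq κ]

theorem one_add_choi_mem_bisymmetricMatrices (A : choiSpace ι κ) :
    1 + choi A ∈ bisymmetricMatrices ι κ :=
  add_mem one_mem_bisymmetricMatrices (choi_mem_bisymmetricMatrices A)

variable (ι κ)

/-- The section of the cone of nonnegative biquadratic forms. -/
def posSection : Set (choiSpace ι κ) := {A | ∀ x y, 0 ≤ biquadForm x y (1 + choi A)}

/-- The section of the cone of sums of squares of bilinear forms. These are the biquadratic forms of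
positive semidefinite matrices, which need not be bisymmetric. -/
def sosSection : Set (choiSpace ι κ) :=
  {A | ∃ M : Matrix (ι × κ) (ι × κ) ℝ, M.PosSemidef ∧
    ∀ x y, biquadForm x y (1 + choi A) = biquadForm x y M}

variable {ι κ} [MeasurableSpace (choiSpace ι κ)] [BorelSpace (choiSpace ι κ)]
  (ν : Measure (choiSpace ι κ)) [ν.IsAddHaarMeasure]

theorem ofReal_pow_mul_measure_closedBall_le_posSection {t : ℝ} (ht : 0 < t)
    (hcard : 4 * (81 ^ (Fintype.card ι + Fintype.card κ) : ℝ) ≤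
      Real.exp (Module.finrank ℝ (choiSpace ι κ) * t ^ 2 / 2)) :
    ENNReal.ofReal (81 / (256 * t)) ^ Module.finrank ℝ (choiSpace ι κ) * ν (closedBall 0 1) ≤
      2 * ν (posSection ι κ) := by
  obtain ⟨Λ, _, φ, hφcard, hφ, hform⟩ := exists_functionals_controlling_biquadForm ι κ
  refine ofReal_pow_mul_measure_closedBall_le ν (φ := fun i => (φ i).comp choi)
    (fun i A => (hφ i _).trans_eq (norm_choi A)) ht.le (hcard.trans' (by gcongr)) (by positivity)
    fun A hA x y => ?_
  have hAxy := hform (choi A) t hA x y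
  rw [map_smul, map_add, biquadForm_one, map_smul, smul_eq_mul]
  calc (0 : ℝ) = ‖x‖ ^ 2 * ‖y‖ ^ 2 + 81 / (256 * t) * -(256 / 81 * t * (‖x‖ ^ 2 * ‖y‖ ^ 2)) := by
        field_simp
        ring
    _ ≤ _ := by
        gcongr
        exact neg_le_of_abs_le hAxy

theorem ofReal_pow_mul_measure_closedBall_le_sosSection {t : ℝ} (ht : 0 < t)
    (hcard : 4 * (81 ^ (Fintype.card ι * Fintype.card κ) : ℝ) ≤
      Real.exp (Module.finrank ℝ (choiSpace ι κ) * t ^ 2 / 2)) :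
    ENNReal.ofReal (9 / (16 * t)) ^ Module.finrank ℝ (choiSpace ι κ) * ν (closedBall 0 1) ≤
      2 * ν (sosSection ι κ) := by
  obtain ⟨Λ, _, φ, hφcard, hφ, hform⟩ :=
    exists_functionals_controlling_entryAlong (ι × κ) (ι × κ)
  have h81 : (9 : ℝ) ^ (Fintype.card (ι × κ) + Fintype.card (ι × κ)) =
      81 ^ (Fintype.card ι * Fintype.card κ) := by
    rw [Fintype.card_prod, pow_add, ← mul_pow]
    norm_num
  refine ofReal_pow_mul_measure_closedBall_le ν (φ := fun i => (φ i).comp choi)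
    (fun i A => (hφ i _).trans_eq (norm_choi A)) ht.le
    (hcard.trans' (by rw [← h81]; gcongr)) (by positivity)
    fun A hA => ⟨_, .of_dotProduct_mulVec_nonneg ?_ fun v => ?_, fun _ _ => rfl⟩
  · exact (one_add_choi_mem_bisymmetricMatrices _).1
  · set x : EuclideanSpace ℝ (ι × κ) := WithLp.toLp 2 v
    have hAx := hform (choi A) t hA x x
    change 0 ≤ entryAlong x x (1 + choi ((9 / (16 * t)) • A))
    rw [map_smul, map_add, entryAlong_one, real_inner_self_eq_norm_mul_norm, map_smul, smul_eq_mul]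
    calc (0 : ℝ) = ‖x‖ * ‖x‖ + 9 / (16 * t) * -(16 / 9 * t * (‖x‖ * ‖x‖)) := by
          field_simp
          ring
      _ ≤ _ := by
          gcongr
          exact neg_le_of_abs_le hAx

end ChoiSpace

section GramFactor

open Matrix

theorem exists_eq_mul_transpose_of_posSemidef {κ : Type*} [Fintype κ] {M : Matrix κ κ ℝ}
    (hM : M.PosSemidef) : ∃ B : Matrix κ κ ℝ, M = B * Bᵀ := by
  classical
  open ComplexOrder MatrixOrder in
  obtain ⟨B, rfl⟩ := CStarAlgebra.nonneg_iff_eq_star_mul_self.mp hM.nonneg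
  exact ⟨Bᵀ, by rw [star_eq_conjTranspose, conjTranspose_eq_transpose_of_trivial,
    transpose_transpose]⟩

end GramFactor

section UpperBounds

open Matrix Metric
open scoped Matrix.Norms.Frobenius

theorem frobenius_norm_sq_eq_trace_mul_transpose {κ : Type*} [Fintype κ] (B : Matrix κ κ ℝ) :
    ‖B‖ ^ 2 = (B * Bᵀ).trace := by
  rw [frobenius_norm_sq]
  simp only [trace, diag_apply, mul_apply, transpose_apply, sq]

section Sos

variable {ι κ : Type*} [Fintype ι] [Fintype κ] [DecidableEq ι] [DecidableEq κ]

theorem trace_one_add_choi (A : choiSpace ι κ) :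
    (1 + choi A).trace = Fintype.card ι * Fintype.card κ := by
  rw [trace_add, trace_choi, add_zero, trace_one, Fintype.card_prod, Nat.cast_mul]

theorem exists_gram_of_mem_sosSection {A : choiSpace ι κ} (hA : A ∈ sosSection ι κ) :
    ∃ B : Matrix (ι × κ) (ι × κ) ℝ, ‖B‖ ^ 2 = Fintype.card ι * Fintype.card κ ∧
      1 + choi A = partialSymmetrization (B * Bᵀ) := by
  obtain ⟨M, hM, hAM⟩ := hA
  have hMT : Mᵀ = M := by
    rw [← conjTranspose_eq_transpose_of_trivial]
    exact hM.isHermitian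
  have hsymm := eq_partialSymmetrization_of_biquadForm_eq (one_add_choi_mem_bisymmetricMatrices A)
    hMT hAM
  obtain ⟨B, rfl⟩ := exists_eq_mul_transpose_of_posSemidef hM
  refine ⟨B, ?_, hsymm⟩
  rw [frobenius_norm_sq_eq_trace_mul_transpose, ← trace_partialSymmetrization, ← hsymm,
    trace_one_add_choi]

theorem measure_sosSection_le [Nonempty ι] [Nonempty κ] [MeasurableSpace (choiSpace ι κ)]
    [BorelSpace (choiSpace ι κ)] (ν : Measure (choiSpace ι κ)) [ν.IsAddHaarMeasure] {t : ℝ}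
    (ht : 0 ≤ t) (hcard : 4 * (81 ^ (Fintype.card ι * Fintype.card κ) : ℝ) ≤
      Real.exp (((Fintype.card ι * Fintype.card κ) ^ 2 : ℕ) * t ^ 2 / 2)) :
    ν (sosSection ι κ) ≤ 2 * 2 ^ (Fintype.card ι * Fintype.card κ) ^ 2 *
      (ENNReal.ofReal (64 / 9 * (Fintype.card ι * Fintype.card κ) * t) ^
        Module.finrank ℝ (choiSpace ι κ) * ν (closedBall 0 1)) := by
  choose! B hBnorm hB using fun A (hA : A ∈ sosSection ι κ) => exists_gram_of_mem_sosSection hA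
  have hgram := measure_le_of_gram ν (β := Unit) (κ := ι × κ) ht (S := sosSection ι κ)
    (B := fun A _ => B A) (R := Fintype.card ι * Fintype.card κ) (K := 1)
    (by simpa only [Fintype.card_unit, Fintype.card_prod, Nat.cast_one, one_mul] using hcard)
    (by positivity) zero_le_one
    (fun A hA => by rw [Fintype.sum_unique, hBnorm A hA]) fun A hA A' hA' => ?_
  · simpa only [Fintype.card_unit, Fintype.card_prod, one_mul, mul_one] using hgram
  · rw [Fintype.sum_unique, one_pow, one_mul, ← norm_choi, map_sub,
      ← add_sub_add_left_eq_sub _ _ 1, hB A hA, hB A' hA', ← map_sub]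
    gcongr
    exact frobenius_norm_partialSymmetrization_le _

end Sos

section SkewSigns

/-- A skew-symmetric matrix of signs. -/
structure IsSkewSign {ι : Type*} (ε : ι → ι → ℝ) : Prop where
  skew : ∀ i j, ε j i = -ε i j
  sq_eq_one : ∀ i j, i ≠ j → ε i j ^ 2 = 1

theorem exists_isSkewSign (ι : Type*) [Finite ι] : ∃ ε : ι → ι → ℝ, IsSkewSign ε := by
  obtain ⟨n, ⟨e⟩⟩ := Finite.exists_equiv_fin ι
  refine ⟨fun i j => ((e i - e j : ℤ).sign : ℝ), fun i j => ?_, fun i j hij => ?_⟩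
  · rw [← neg_sub, Int.sign_neg, Int.cast_neg]
  · have hne : (e i - e j : ℤ) ≠ 0 :=
      sub_ne_zero.2 fun h => hij (e.injective (Fin.ext (by exact_mod_cast h)))
    rcases hne.lt_or_gt with h | h
    · simp [Int.sign_eq_neg_one_of_neg h]
    · simp [Int.sign_eq_one_of_pos h]

end SkewSigns

section SwapFactors

variable {ι κ : Type*}

/-- The matrix on `ℝ^κ ⊗ ℝ^ι` obtained from one on `ℝ^ι ⊗ ℝ^κ` by exchanging the tensor factors. -/
def swapFactors : Matrix (ι × κ) (ι × κ) ℝ →ₗ[ℝ] Matrix (κ × ι) (κ × ι) ℝ where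
  toFun M := M.submatrix Prod.swap Prod.swap
  map_add' _ _ := rfl
  map_smul' _ _ := rfl

theorem swapFactors_apply (M : Matrix (ι × κ) (ι × κ) ℝ) (p q : κ × ι) :
    swapFactors M p q = M p.swap q.swap := rfl

theorem swapFactors_mem_bisymmetricMatrices {M : Matrix (ι × κ) (ι × κ) ℝ}
    (hM : M ∈ bisymmetricMatrices ι κ) : swapFactors M ∈ bisymmetricMatrices κ ι := by
  constructor
  · conv_rhs => rw [← hM.1]
    rfl
  · conv_rhs => rw [← hM.2, ← hM.1]
    rfl

variable [Fintype ι] [Fintype κ]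

theorem trace_swapFactors (M : Matrix (ι × κ) (ι × κ) ℝ) : (swapFactors M).trace = M.trace :=
  (Equiv.prodComm κ ι).sum_comp fun p => M p p

theorem frobenius_norm_swapFactors (M : Matrix (ι × κ) (ι × κ) ℝ) : ‖swapFactors M‖ = ‖M‖ := by
  rw [← sq_eq_sq₀ (norm_nonneg _) (norm_nonneg _), frobenius_norm_sq, frobenius_norm_sq]
  exact Fintype.sum_equiv (Equiv.prodComm κ ι) _ _ fun p =>
    (Equiv.prodComm κ ι).sum_comp fun q => M p.swap q ^ 2

theorem biquadForm_swapFactors (x : EuclideanSpace ℝ ι) (y : EuclideanSpace ℝ κ)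
    (M : Matrix (ι × κ) (ι × κ) ℝ) : biquadForm y x (swapFactors M) = biquadForm x y M := by
  rw [biquadForm_apply, biquadForm_apply]
  refine Fintype.sum_equiv (Equiv.prodComm κ ι) _ _ fun p =>
    Fintype.sum_equiv (Equiv.prodComm κ ι) _ _ fun q => ?_
  rw [swapFactors_apply, Equiv.prodComm_apply, Equiv.prodComm_apply, Prod.fst_swap, Prod.snd_swap,
    Prod.fst_swap, Prod.snd_swap]
  ring

end SwapFactors

section Pos

variable {ι κ : Type*}

/-- The block in position `(i, j)` of a matrix on `ℝ^ι ⊗ ℝ^κ`. -/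
def outerBlock (i j : ι) : Matrix (ι × κ) (ι × κ) ℝ →ₗ[ℝ] Matrix κ κ ℝ where
  toFun M := M.submatrix (Prod.mk i) (Prod.mk j)
  map_add' _ _ := rfl
  map_smul' _ _ := rfl

theorem outerBlock_apply (i j : ι) (M : Matrix (ι × κ) (ι × κ) ℝ) (k l : κ) :
    outerBlock i j M k l = M (i, k) (j, l) := rfl

theorem transpose_outerBlock {M : Matrix (ι × κ) (ι × κ) ℝ} (hM : M ∈ bisymmetricMatrices ι κ)
    (i j : ι) : (outerBlock i j M)ᵀ = outerBlock i j M := by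
  conv_rhs => rw [← hM.2]
  rfl

theorem outerBlock_comm {M : Matrix (ι × κ) (ι × κ) ℝ} (hM : M ∈ bisymmetricMatrices ι κ)
    (i j : ι) : outerBlock j i M = outerBlock i j M := by
  rw [← transpose_outerBlock hM]
  conv_rhs => rw [← hM.1]
  rfl

/-- The block `(eᵢ + εᵢⱼ eⱼ)ᵀ M (eᵢ + εᵢⱼ eⱼ)` for `i ≠ j`, and `2 eᵢᵀ M eᵢ` for `i = j`, if `M` is
bisymmetric and `ε` is a skew sign. Being positive semidefinite if the biquadratic form of `M` is
nonnegative, these blocks have Gram factors, while the blocks of `M` need not. -/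
def polarizedBlock (ε : ι → ι → ℝ) (i j : ι) : Matrix (ι × κ) (ι × κ) ℝ →ₗ[ℝ] Matrix κ κ ℝ :=
  outerBlock i i + outerBlock j j + (2 * ε i j) • outerBlock i j

theorem polarizedBlock_apply (ε : ι → ι → ℝ) (i j : ι) (M : Matrix (ι × κ) (ι × κ) ℝ) :
    polarizedBlock ε i j M =
      outerBlock i i M + outerBlock j j M + (2 * ε i j) • outerBlock i j M := rfl

variable [Fintype ι] [Fintype κ] {ε : ι → ι → ℝ} {M : Matrix (ι × κ) (ι × κ) ℝ}

theorem entryAlong_tens_single [DecidableEq ι] (i j : ι) (y y' : EuclideanSpace ℝ κ) :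
    entryAlong (tens (EuclideanSpace.single i 1) y) (tens (EuclideanSpace.single j 1) y') M =
      entryAlong y y' (outerBlock i j M) := by
  simp [entryAlong_apply, dotProduct, mulVec, tens_apply, Fintype.sum_prod_type, outerBlock_apply]

theorem posSemidef_polarizedBlock (hε : IsSkewSign ε) (hM : M ∈ bisymmetricMatrices ι κ)
    (hpos : ∀ x y, 0 ≤ biquadForm x y M) (i j : ι) : (polarizedBlock ε i j M).PosSemidef := by
  classical
  have hsymm : (polarizedBlock ε i j M).IsHermitian := by
    rw [IsHermitian, conjTranspose_eq_transpose_of_trivial, polarizedBlock_apply, transpose_add,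
      transpose_add, transpose_smul, transpose_outerBlock hM, transpose_outerBlock hM,
      transpose_outerBlock hM]
  refine .of_dotProduct_mulVec_nonneg hsymm fun v => ?_
  set y : EuclideanSpace ℝ κ := WithLp.toLp 2 v
  change 0 ≤ entryAlong y y (polarizedBlock ε i j M)
  rw [polarizedBlock_apply, map_add, map_add, map_smul, smul_eq_mul]
  have hsq : ∀ a : ℝ, 0 ≤ entryAlong y y (outerBlock i i M) +
      a ^ 2 * entryAlong y y (outerBlock j j M) +
        2 * a * entryAlong y y (outerBlock i j M) := fun a => by
    have h := hpos (EuclideanSpace.single i 1 + a • EuclideanSpace.single j 1) y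
    change 0 ≤ bilinFormOf M (tens _ y) (tens _ y) at h
    simp only [map_add, map_smul, LinearMap.add_apply, LinearMap.smul_apply, smul_eq_mul,
      bilinFormOf_apply, entryAlong_tens_single, outerBlock_comm hM i j] at h
    linarith
  rcases eq_or_ne i j with rfl | hij
  · have hε₀ : ε i i = 0 := by linarith [hε.skew i i]
    rw [hε₀]
    linarith [hsq 0]
  · simpa only [hε.sq_eq_one i j hij, one_mul] using hsq (ε i j)

theorem sum_trace_polarizedBlock (hε : IsSkewSign ε) (hM : M ∈ bisymmetricMatrices ι κ) :
    ∑ i, ∑ j, (polarizedBlock ε i j M).trace = 2 * Fintype.card ι * M.trace := by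
  have hskew : ∑ i, ∑ j, ε i j * (outerBlock i j M).trace = 0 := by
    have hneg : ∑ i, ∑ j, ε i j * (outerBlock i j M).trace =
        -∑ i, ∑ j, ε i j * (outerBlock i j M).trace := by
      conv_lhs => rw [Finset.sum_comm]
      simp only [← Finset.sum_neg_distrib]
      refine Finset.sum_congr rfl fun i _ => Finset.sum_congr rfl fun j _ => ?_
      rw [hε.skew i j, outerBlock_comm hM i j, neg_mul]
    linarith
  have htrace : ∑ i, (outerBlock i i M).trace = M.trace := by
    simp only [trace, diag_apply, outerBlock_apply, Fintype.sum_prod_type]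
  simp only [polarizedBlock_apply, trace_add, trace_smul, smul_eq_mul, mul_assoc,
    Finset.sum_add_distrib, ← Finset.mul_sum, hskew, htrace, Finset.sum_const, Finset.card_univ,
    nsmul_eq_mul]
  ring

theorem frobenius_norm_sq_le_sum_polarizedBlock (hε : IsSkewSign ε)
    (hM : M ∈ bisymmetricMatrices ι κ) :
    ‖M‖ ^ 2 ≤ (1 / 2) ^ 2 * ∑ p : ι × ι, ‖polarizedBlock ε p.1 p.2 M‖ ^ 2 := by
  have hblocks : ‖M‖ ^ 2 = ∑ i, ∑ j, ‖outerBlock i j M‖ ^ 2 := by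
    simp only [frobenius_norm_sq, Fintype.sum_prod_type, outerBlock_apply]
    exact Finset.sum_congr rfl fun i _ => Finset.sum_comm
  have hblock : ∀ i j, ‖outerBlock i j M‖ ^ 2 ≤
      1 / 8 * (‖polarizedBlock ε i j M‖ ^ 2 + ‖polarizedBlock ε j i M‖ ^ 2) := fun i j => by
    rcases eq_or_ne i j with rfl | hij
    · have hε₀ : ε i i = 0 := by linarith [hε.skew i i]
      have hii : polarizedBlock ε i i M = (2 : ℝ) • outerBlock i i M := by
        rw [polarizedBlock_apply, hε₀, mul_zero, zero_smul, add_zero, two_smul]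
      rw [hii, norm_smul, mul_pow, Real.norm_ofNat]
      linarith
    · have hdiff : polarizedBlock ε i j M - polarizedBlock ε j i M =
          (4 * ε i j) • outerBlock i j M := by
        rw [polarizedBlock_apply, polarizedBlock_apply, outerBlock_comm hM i j, hε.skew i j]
        module
      have hnorm := congrArg (‖·‖ ^ 2) hdiff
      rw [norm_smul, mul_pow, Real.norm_eq_abs, sq_abs, mul_pow, hε.sq_eq_one i j hij] at hnorm
      have hle := (pow_le_pow_left₀ (norm_nonneg _) (norm_sub_le (polarizedBlock ε i j M)
        (polarizedBlock ε j i M)) 2).trans add_sq_le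
      linarith
  rw [hblocks, Fintype.sum_prod_type]
  refine (Finset.sum_le_sum fun i _ => Finset.sum_le_sum fun j _ => hblock i j).trans_eq ?_
  simp only [← Finset.mul_sum, Finset.sum_add_distrib]
  rw [Finset.sum_comm (f := fun i j => ‖polarizedBlock ε j i M‖ ^ 2)]
  ring

variable {G : Type*} [NormedAddCommGroup G] [NormedSpace ℝ G] [FiniteDimensional ℝ G]
  [MeasurableSpace G] [BorelSpace G]

theorem measure_le_of_biquadForm_nonneg [Nonempty ι] [Nonempty κ] (ν : Measure G)
    [ν.IsAddHaarMeasure] {t : ℝ} (ht : 0 ≤ t)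
    (hcard : 4 * (Fintype.card ι ^ 2 * 81 ^ Fintype.card κ : ℝ) ≤
      Real.exp ((Fintype.card ι ^ 2 * Fintype.card κ ^ 2 : ℕ) * t ^ 2 / 2))
    {S : Set G} {M : G → Matrix (ι × κ) (ι × κ) ℝ}
    (hM : ∀ s ∈ S, M s ∈ bisymmetricMatrices ι κ)
    (htrace : ∀ s ∈ S, (M s).trace = Fintype.card ι * Fintype.card κ)
    (hpos : ∀ s ∈ S, ∀ x y, 0 ≤ biquadForm x y (M s))
    (hdist : ∀ s ∈ S, ∀ s' ∈ S, ‖s - s'‖ = ‖M s - M s'‖) :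
    ν S ≤ 2 * 2 ^ (Fintype.card ι ^ 2 * Fintype.card κ ^ 2) *
      (ENNReal.ofReal (64 / 9 * (Fintype.card ι ^ 2 * Fintype.card κ) * t) ^ Module.finrank ℝ G *
        ν (closedBall 0 1)) := by
  obtain ⟨ε, hε⟩ := exists_isSkewSign ι
  choose! B hB using fun s (hs : s ∈ S) (p : ι × ι) => exists_eq_mul_transpose_of_posSemidef
    (posSemidef_polarizedBlock hε (hM s hs) (hpos s hs) p.1 p.2)
  have hgram := measure_le_of_gram ν (β := ι × ι) ht
    (by simpa only [Fintype.card_prod, ← sq, Nat.cast_pow] using hcard) (S := S) (B := B)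
    (R := 2 * Fintype.card ι ^ 2 * Fintype.card κ) (K := 1 / 2) (by positivity) (by norm_num)
    (fun s hs => le_of_eq ?_) fun s hs s' hs' => ?_
  · simp only [Fintype.card_prod, ← sq] at hgram
    convert hgram using 5
    ring
  · simp only [frobenius_norm_sq_eq_trace_mul_transpose, ← hB s hs]
    rw [Fintype.sum_prod_type, sum_trace_polarizedBlock hε (hM s hs), htrace s hs]
    ring
  · simp only [hdist s hs s' hs', ← hB s hs, ← hB s' hs', ← map_sub]
    exact frobenius_norm_sq_le_sum_polarizedBlock hε (sub_mem (hM s hs) (hM s' hs'))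

section PosSection

variable [DecidableEq ι] [DecidableEq κ] [Nonempty ι] [Nonempty κ]
  [MeasurableSpace (choiSpace ι κ)] [BorelSpace (choiSpace ι κ)] (ν : Measure (choiSpace ι κ))
  [ν.IsAddHaarMeasure] {t : ℝ}

theorem measure_posSection_le_left (ht : 0 ≤ t)
    (hcard : 4 * (Fintype.card ι ^ 2 * 81 ^ Fintype.card κ : ℝ) ≤
      Real.exp ((Fintype.card ι ^ 2 * Fintype.card κ ^ 2 : ℕ) * t ^ 2 / 2)) :
    ν (posSection ι κ) ≤ 2 * 2 ^ (Fintype.card ι ^ 2 * Fintype.card κ ^ 2) *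
      (ENNReal.ofReal (64 / 9 * (Fintype.card ι ^ 2 * Fintype.card κ) * t) ^
        Module.finrank ℝ (choiSpace ι κ) * ν (closedBall 0 1)) :=
  measure_le_of_biquadForm_nonneg ν ht hcard (M := fun A => 1 + choi A)
    (fun A _ => one_add_choi_mem_bisymmetricMatrices A) (fun A _ => trace_one_add_choi A)
    (fun _ hA => hA) fun A _ A' _ => by rw [add_sub_add_left_eq_sub, ← map_sub, norm_choi]

theorem measure_posSection_le_right (ht : 0 ≤ t)
    (hcard : 4 * (Fintype.card κ ^ 2 * 81 ^ Fintype.card ι : ℝ) ≤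
      Real.exp ((Fintype.card κ ^ 2 * Fintype.card ι ^ 2 : ℕ) * t ^ 2 / 2)) :
    ν (posSection ι κ) ≤ 2 * 2 ^ (Fintype.card κ ^ 2 * Fintype.card ι ^ 2) *
      (ENNReal.ofReal (64 / 9 * (Fintype.card κ ^ 2 * Fintype.card ι) * t) ^
        Module.finrank ℝ (choiSpace ι κ) * ν (closedBall 0 1)) := by
  refine measure_le_of_biquadForm_nonneg ν ht hcard (M := fun A => swapFactors (1 + choi A))
    (fun A _ => swapFactors_mem_bisymmetricMatrices (one_add_choi_mem_bisymmetricMatrices A))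
    (fun A _ => ?_) (fun A hA y x => ?_) fun A _ A' _ => ?_
  · rw [trace_swapFactors, trace_one_add_choi, mul_comm]
  · rw [biquadForm_swapFactors]
    exact hA x y
  · rw [← map_sub, frobenius_norm_swapFactors, add_sub_add_left_eq_sub, ← map_sub, norm_choi]

end PosSection
end Pos
end UpperBounds

section SphereMoments

variable {n : ℕ} {σ : Measure (Fin n → ℝ)}

theorem IsSphereMeasure.ae_sum_sq (h : IsSphereMeasure n σ) : ∀ᵐ x ∂σ, ∑ i, x i ^ 2 = 1 :=
  h.onSphere

theorem IsSphereMeasure.integrable_mul (h : IsSphereMeasure n σ) (i j : Fin n) :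
    Integrable (fun x => x i * x j) σ := by
  have := h.prob
  refine Integrable.of_bound (C := 1) (by fun_prop) ?_
  filter_upwards [h.ae_sum_sq] with x hx
  have hcoord : ∀ k, |x k| ≤ 1 := fun k => (sq_le_one_iff_abs_le_one _).1 <|
    (Finset.single_le_sum (f := fun k => x k ^ 2) (fun _ _ => sq_nonneg _)
      (Finset.mem_univ k)).trans_eq hx
  rw [Real.norm_eq_abs, abs_mul]
  exact mul_le_one₀ (hcoord i) (abs_nonneg _) (hcoord j)

theorem IsSphereMeasure.integral_mulVec (h : IsSphereMeasure n σ) {Q : Matrix (Fin n) (Fin n) ℝ}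
    (hQ : Q * Q.transpose = 1) (i j : Fin n) :
    ∫ x, Q.mulVec x i * Q.mulVec x j ∂σ = ∫ x, x i * x j ∂σ := by
  have hcont : Continuous Q.mulVec := Q.mulVecLin.continuous_of_finiteDimensional
  conv_rhs => rw [← h.invariant Q hQ]
  rw [integral_map hcont.measurable.aemeasurable]
  exact (by fun_prop : Continuous fun x : Fin n → ℝ => x i * x j).aestronglyMeasurable

theorem IsSphereMeasure.integral_mul_of_ne (h : IsSphereMeasure n σ) {i j : Fin n} (hij : i ≠ j) :
    ∫ x, x i * x j ∂σ = 0 := by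
  have hflip := h.integral_mulVec (Q := Matrix.diagonal fun a => if a = i then -1 else 1) (by
    rw [Matrix.diagonal_transpose, Matrix.diagonal_mul_diagonal, ← Matrix.diagonal_one]
    congr 1
    ext a
    split_ifs <;> norm_num) i j
  simp only [Matrix.mulVec_diagonal, if_true, if_neg hij.symm, one_mul, neg_mul,
    integral_neg] at hflip
  linarith

theorem IsSphereMeasure.integral_mul_self_eq (h : IsSphereMeasure n σ) (i j : Fin n) :
    ∫ x, x i * x i ∂σ = ∫ x, x j * x j ∂σ := by
  have hswap := h.integral_mulVec
    (Q := (1 : Matrix (Fin n) (Fin n) ℝ).submatrix (Equiv.swap i j) id) (by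
    ext a b
    simp [Matrix.mul_apply, Matrix.one_apply]) i i
  rw [← hswap]
  simp [Matrix.mulVec, dotProduct, Matrix.one_apply]

theorem IsSphereMeasure.integral_mul_self (h : IsSphereMeasure n σ) (i : Fin n) :
    ∫ x, x i * x i ∂σ = 1 / n := by
  have := h.prob
  have hsum : ∑ j, ∫ x, x j * x j ∂σ = 1 := by
    rw [← integral_finsetSum _ fun j _ => h.integrable_mul j j,
      integral_congr_ae (g := fun _ => (1 : ℝ)), integral_const, probReal_univ, one_smul]
    filter_upwards [h.ae_sum_sq] with x hx
    simpa only [sq] using hx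
  rw [Finset.sum_congr rfl fun j _ => h.integral_mul_self_eq j i, Finset.sum_const,
    Finset.card_univ, Fintype.card_fin, nsmul_eq_mul] at hsum
  exact eq_one_div_of_mul_eq_one_right hsum

theorem IsSphereMeasure.integral_mul (h : IsSphereMeasure n σ) (i j : Fin n) :
    ∫ x, x i * x j ∂σ = if i = j then 1 / (n : ℝ) else 0 := by
  split_ifs with hij
  · rw [hij, h.integral_mul_self]
  · exact h.integral_mul_of_ne hij

end SphereMoments

section Biforms

open Matrix

variable {n m : ℕ}

theorem eq_of_beval_eq {f g : MvPolynomial (Fin n ⊕ Fin m) ℝ}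
    (h : ∀ x y, beval f x y = beval g x y) : f = g :=
  MvPolynomial.funext fun v => by
    simpa only [beval, Sum.elim_comp_inl_inr] using h (v ∘ Sum.inl) (v ∘ Sum.inr)

theorem exists_prod_pow_eq_prod {R : Type*} [CommMonoid R] (s : Fin n → ℕ) :
    ∃ p : Fin (∑ i, s i) → Fin n, ∀ x : Fin n → R, ∏ i, x i ^ s i = ∏ r, x (p r) := by
  refine ⟨fun r => (finSigmaFinEquiv.symm r).1, fun x => ?_⟩
  rw [finSigmaFinEquiv.symm.prod_comp fun a => x a.1, Fintype.prod_sigma]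
  simp only [Finset.prod_const, Finset.card_univ, Fintype.card_fin]

theorem weight_bw (s : Fin n ⊕ Fin m →₀ ℕ) :
    Finsupp.weight (bw n m) s = (∑ i, s (Sum.inl i), ∑ k, s (Sum.inr k)) := by
  rw [Finsupp.weight_apply, Finsupp.sum_fintype _ _ (by simp), Fintype.sum_sum_type]
  simp [bw, Prod.ext_iff, Prod.fst_sum, Prod.snd_sum]

theorem biform_subset {a b : ℕ} {V : Submodule ℝ (MvPolynomial (Fin n ⊕ Fin m) ℝ)}
    (hV : ∀ (p : Fin a → Fin n) (q : Fin b → Fin m),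
      (∏ r, X (Sum.inl (p r))) * ∏ r, X (Sum.inr (q r)) ∈ V) :
    Biform n m a b ⊆ V := fun f hf => by
  rw [f.as_sum]
  refine V.sum_mem fun s hs => ?_
  obtain ⟨rfl, rfl⟩ := Prod.ext_iff.1 ((weight_bw s).symm.trans (hf (mem_support_iff.1 hs)))
  obtain ⟨p, hp⟩ := exists_prod_pow_eq_prod (R := MvPolynomial (Fin n ⊕ Fin m) ℝ)
    fun i => s (Sum.inl i)
  obtain ⟨q, hq⟩ := exists_prod_pow_eq_prod (R := MvPolynomial (Fin n ⊕ Fin m) ℝ)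
    fun k => s (Sum.inr k)
  rw [monomial_eq, Finsupp.prod_fintype _ _ fun _ => pow_zero _, Fintype.prod_sum_type,
    hp fun i => X (Sum.inl i), hq fun k => X (Sum.inr k), ← smul_eq_C_mul]
  exact V.smul_mem _ (hV p q)

/-- The monomial `xᵢ yₖ` for `p = (i, k)`. -/
def bilinMonomial (p : Fin n × Fin m) : MvPolynomial (Fin n ⊕ Fin m) ℝ :=
  X (Sum.inl p.1) * X (Sum.inr p.2)

theorem beval_bilinMonomial (p : Fin n × Fin m) (x : Fin n → ℝ) (y : Fin m → ℝ) :
    beval (bilinMonomial p) x y = x p.1 * y p.2 := by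
  rw [beval, bilinMonomial, map_mul, eval_X, eval_X, Sum.elim_inl, Sum.elim_inr]

theorem bilinMonomial_mem_biform (p : Fin n × Fin m) : bilinMonomial p ∈ Biform n m 1 1 :=
  (isWeightedHomogeneous_X ℝ (bw n m) _).mul (isWeightedHomogeneous_X ℝ (bw n m) _)

/-- The biform of bidegree `(1, 1)` with coefficient matrix `c`. -/
def bilinPoly : (Fin n × Fin m → ℝ) →ₗ[ℝ] MvPolynomial (Fin n ⊕ Fin m) ℝ :=
  Fintype.linearCombination ℝ bilinMonomial

theorem bilinPoly_apply (c : Fin n × Fin m → ℝ) : bilinPoly c = ∑ p, c p • bilinMonomial p :=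
  Fintype.linearCombination_apply ..

theorem range_bilinPoly : Set.range (bilinPoly (n := n) (m := m)) = Biform n m 1 1 := by
  refine Set.Subset.antisymm ?_ (biform_subset (V := LinearMap.range bilinPoly) fun p q => ?_)
  · rintro _ ⟨c, rfl⟩
    rw [bilinPoly_apply]
    exact (weightedHomogeneousSubmodule ℝ (bw n m) _).sum_mem fun p _ =>
      Submodule.smul_mem _ _ (bilinMonomial_mem_biform p)
  · refine ⟨Pi.single (p 0, q 0) 1, ?_⟩
    rw [bilinPoly, Fintype.linearCombination_apply_single, one_smul, Fin.prod_univ_one,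
      Fin.prod_univ_one, bilinMonomial]

/-- The biform `(x ⊗ y)ᵀ M (x ⊗ y)` of bidegree `(2, 2)`. -/
def biquadPoly :
    Matrix (Fin n × Fin m) (Fin n × Fin m) ℝ →ₗ[ℝ] MvPolynomial (Fin n ⊕ Fin m) ℝ where
  toFun M := ∑ p, ∑ q, M p q • (bilinMonomial p * bilinMonomial q)
  map_add' M N := by simp only [Matrix.add_apply, add_smul, Finset.sum_add_distrib]
  map_smul' c M := by simp only [Matrix.smul_apply, smul_assoc, Finset.smul_sum, RingHom.id_apply]

theorem biquadPoly_apply (M : Matrix (Fin n × Fin m) (Fin n × Fin m) ℝ) :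
    biquadPoly M = ∑ p, ∑ q, M p q • (bilinMonomial p * bilinMonomial q) := rfl

theorem biquadPoly_single (p q : Fin n × Fin m) :
    biquadPoly (single p q 1) = bilinMonomial p * bilinMonomial q := by
  simp only [biquadPoly_apply, single_apply, ite_and, ite_smul, one_smul, zero_smul,
    Finset.sum_ite_irrel, Finset.sum_ite_eq, Finset.mem_univ, if_true, Finset.sum_const_zero]

theorem beval_biquadPoly (M : Matrix (Fin n × Fin m) (Fin n × Fin m) ℝ) (x : Fin n → ℝ)
    (y : Fin m → ℝ) :
    beval (biquadPoly M) x y = biquadForm (WithLp.toLp 2 x) (WithLp.toLp 2 y) M := by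
  simp only [biquadForm_apply, biquadPoly_apply, beval, map_sum, smul_eval, map_mul]
  refine Finset.sum_congr rfl fun p _ => Finset.sum_congr rfl fun q _ => ?_
  rw [← beval, ← beval, beval_bilinMonomial, beval_bilinMonomial]
  ring

theorem biquadPoly_eq_iff {M N : Matrix (Fin n × Fin m) (Fin n × Fin m) ℝ} :
    biquadPoly M = biquadPoly N ↔ ∀ x y, biquadForm x y M = biquadForm x y N := by
  refine ⟨fun h x y => ?_, fun h => eq_of_beval_eq fun x y => ?_⟩
  · rw [← WithLp.toLp_ofLp 2 x, ← WithLp.toLp_ofLp 2 y, ← beval_biquadPoly, h, beval_biquadPoly]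
  · rw [beval_biquadPoly, beval_biquadPoly, h]

theorem biquadPoly_one : biquadPoly 1 = qpoly n m 1 1 :=
  eq_of_beval_eq fun x y => by
    rw [beval_biquadPoly, biquadForm_one, EuclideanSpace.real_norm_sq_eq,
      EuclideanSpace.real_norm_sq_eq]
    simp [beval, qpoly]

theorem range_biquadPoly : Set.range (biquadPoly (n := n) (m := m)) = Biform n m 2 2 := by
  refine Set.Subset.antisymm ?_ (biform_subset (V := LinearMap.range biquadPoly) fun p q => ?_)
  · rintro _ ⟨M, rfl⟩
    exact (weightedHomogeneousSubmodule ℝ (bw n m) _).sum_mem fun p _ =>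
      Submodule.sum_mem _ fun q _ => Submodule.smul_mem _ _
        ((bilinMonomial_mem_biform p).mul (bilinMonomial_mem_biform q))
  · refine ⟨single (p 0, q 0) (p 1, q 1) 1, ?_⟩
    rw [biquadPoly_single, Fin.prod_univ_two, Fin.prod_univ_two]
    exact mul_mul_mul_comm _ _ _ _

theorem exists_mem_bisymmetricMatrices_biquadPoly_eq {f : MvPolynomial (Fin n ⊕ Fin m) ℝ}
    (hf : f ∈ Biform n m 2 2) :
    ∃ M ∈ bisymmetricMatrices (Fin n) (Fin m), biquadPoly M = f := by
  rw [← range_biquadPoly] at hf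
  obtain ⟨N, rfl⟩ := hf
  have hsymm : ((1 / 2 : ℝ) • (N + Nᵀ))ᵀ = (1 / 2 : ℝ) • (N + Nᵀ) := by
    rw [transpose_smul, transpose_add, transpose_transpose, add_comm]
  refine ⟨_, partialSymmetrization_mem_bisymmetricMatrices hsymm, biquadPoly_eq_iff.2 fun x y => ?_⟩
  rw [biquadForm_partialSymmetrization, map_smul, map_add, biquadForm_transpose, smul_eq_mul]
  ring

theorem biquadPoly_mul_transpose {α : Type*} [Fintype α] (B : Matrix (Fin n × Fin m) α ℝ) :
    biquadPoly (B * Bᵀ) = ∑ a, bilinPoly (Bᵀ a) ^ 2 := by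
  simp only [biquadPoly_apply, bilinPoly_apply, sq, Finset.sum_mul_sum, mul_apply, transpose_apply,
    Finset.sum_smul, smul_mul_smul_comm]
  conv_rhs => rw [Finset.sum_comm]
  exact Finset.sum_congr rfl fun p _ => Finset.sum_comm

theorem mem_sqSet_iff {f : MvPolynomial (Fin n ⊕ Fin m) ℝ} :
    f ∈ SqSet n m 1 1 ↔ ∃ M, M.PosSemidef ∧ f = biquadPoly M := by
  constructor
  · rintro ⟨N, g, hg, rfl⟩
    simp only [← range_bilinPoly] at hg
    choose c hc using hg
    refine ⟨(of c)ᵀ * (of c)ᵀᵀ, ?_, ?_⟩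
    · rw [← conjTranspose_eq_transpose_of_trivial]
      exact posSemidef_self_mul_conjTranspose _
    · rw [biquadPoly_mul_transpose]
      exact Finset.sum_congr rfl fun i _ => by rw [← hc i]; rfl
  · rintro ⟨M, hM, rfl⟩
    obtain ⟨B, rfl⟩ := exists_eq_mul_transpose_of_posSemidef hM
    let e := Fintype.equivFin (Fin n × Fin m)
    refine ⟨_, fun r => bilinPoly (Bᵀ (e.symm r)), fun r => ?_, ?_⟩
    · exact range_bilinPoly.subset ⟨_, rfl⟩
    · rw [biquadPoly_mul_transpose]
      exact (e.symm.sum_comp _).symm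

theorem bavg_biquadPoly {σ₁ : Measure (Fin n → ℝ)} {σ₂ : Measure (Fin m → ℝ)}
    (h₁ : IsSphereMeasure n σ₁) (h₂ : IsSphereMeasure m σ₂)
    (M : Matrix (Fin n × Fin m) (Fin n × Fin m) ℝ) :
    bavg σ₁ σ₂ (biquadPoly M) = M.trace / (n * m) := by
  have hbeval : ∀ x y, beval (biquadPoly M) x y =
      ∑ p, ∑ q, M p q * (x p.1 * x q.1) * (y p.2 * y q.2) := fun x y => by
    rw [beval_biquadPoly, biquadForm_apply]
    exact Finset.sum_congr rfl fun p _ => Finset.sum_congr rfl fun q _ => by ring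
  have hinner : ∀ x, ∫ y, beval (biquadPoly M) x y ∂σ₂ =
      ∑ p, ∑ q, M p q * (x p.1 * x q.1) * ∫ y, y p.2 * y q.2 ∂σ₂ := fun x => by
    simp only [hbeval]
    rw [integral_finsetSum _ fun p _ => integrable_finsetSum _ fun q _ =>
      (h₂.integrable_mul p.2 q.2).const_mul _]
    simp only [integral_finsetSum _ fun _ _ => (h₂.integrable_mul _ _).const_mul _,
      integral_const_mul]
  rw [bavg]
  simp only [hinner]
  rw [integral_finsetSum _ fun p _ => integrable_finsetSum _ fun q _ =>
    ((h₁.integrable_mul p.1 q.1).const_mul _).mul_const _]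
  simp only [integral_finsetSum _ fun _ _ => ((h₁.integrable_mul _ _).const_mul _).mul_const _,
    integral_mul_const, integral_const_mul, h₁.integral_mul, h₂.integral_mul]
  have hdiag : ∀ p q : Fin n × Fin m, M p q * (if p.1 = q.1 then 1 / (n : ℝ) else 0) *
      (if p.2 = q.2 then 1 / (m : ℝ) else 0) = if p = q then M p p / (n * m) else 0 := by
    rintro ⟨i, k⟩ ⟨j, l⟩
    by_cases hij : i = j <;> by_cases hkl : k = l <;> simp [hij, hkl]
    ring
  simp only [hdiag, Finset.sum_ite_eq, Finset.mem_univ, if_true, ← Finset.sum_div]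
  rfl

end Biforms

section HaarTransfer

theorem exists_linearEquiv_apply_eq_of_range_eq {R E F V : Type*} [Ring R] [AddCommGroup E]
    [Module R E] [AddCommGroup F] [Module R F] [AddCommGroup V] [Module R V] {ψ : E →ₗ[R] V}
    {φ : F →ₗ[R] V} (hψ : Function.Injective ψ) (hφ : Function.Injective φ)
    (h : LinearMap.range ψ = LinearMap.range φ) : ∃ e : E ≃ₗ[R] F, ∀ a, φ (e a) = ψ a :=
  ⟨(LinearEquiv.ofInjective ψ hψ).trans
    ((LinearEquiv.ofEq _ _ h).trans (LinearEquiv.ofInjective φ hφ).symm), fun a =>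
    congrArg Subtype.val ((LinearEquiv.ofInjective φ hφ).apply_symm_apply
      (LinearEquiv.ofEq _ _ h (LinearEquiv.ofInjective ψ hψ a)))⟩

theorem exists_isAddHaarMeasure_measure_preimage_eq {E F V : Type*} [NormedAddCommGroup E]
    [NormedSpace ℝ E] [FiniteDimensional ℝ E] [MeasurableSpace E] [BorelSpace E]
    [NormedAddCommGroup F] [NormedSpace ℝ F] [FiniteDimensional ℝ F] [MeasurableSpace F]
    [BorelSpace F] [AddCommGroup V] [Module ℝ V] {ψ : E →ₗ[ℝ] V} {φ : F →ₗ[ℝ] V}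
    (hψ : Function.Injective ψ) (hφ : Function.Injective φ) (h : Set.range ψ = Set.range φ)
    (μ : Measure E) [μ.IsAddHaarMeasure] :
    Module.finrank ℝ E = Module.finrank ℝ F ∧
      ∃ ν : Measure F, ν.IsAddHaarMeasure ∧ ∀ S, μ (ψ ⁻¹' S) = ν (φ ⁻¹' S) := by
  obtain ⟨e, he⟩ := exists_linearEquiv_apply_eq_of_range_eq hψ hφ (SetLike.coe_injective h)
  refine ⟨e.finrank_eq, μ.map e.toContinuousLinearEquiv,
    e.toContinuousLinearEquiv.isAddHaarMeasure_map μ, fun S => ?_⟩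
  refine Eq.trans (congrArg μ ?_)
    (e.toContinuousLinearEquiv.toHomeomorph.toMeasurableEquiv.map_apply (φ ⁻¹' S)).symm
  ext a
  exact iff_of_eq (congrArg (· ∈ S) (he a).symm)

end HaarTransfer

section ChoiPoly

variable {n m : ℕ}

/-- The biform of an element of `choiSpace`; this parametrizes the biforms of mean zero. -/
def choiPoly : choiSpace (Fin n) (Fin m) →ₗ[ℝ] MvPolynomial (Fin n ⊕ Fin m) ℝ :=
  biquadPoly.comp choi

theorem choiPoly_apply (A : choiSpace (Fin n) (Fin m)) : choiPoly A = biquadPoly (choi A) := rfl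

theorem choiPoly_add_qpoly (A : choiSpace (Fin n) (Fin m)) :
    choiPoly A + qpoly n m 1 1 = biquadPoly (1 + choi A) := by
  rw [map_add, biquadPoly_one, choiPoly_apply, add_comm]

theorem choi_injective {ι κ : Type*} [Fintype ι] [Fintype κ] :
    Function.Injective (choi (ι := ι) (κ := κ)) :=
  (euclideanToMatrix _).injective.comp Subtype.val_injective

theorem choiPoly_injective : Function.Injective (choiPoly (n := n) (m := m)) := by
  refine (injective_iff_map_eq_zero _).2 fun A hA => ?_
  rw [choiPoly_apply, ← map_zero biquadPoly, biquadPoly_eq_iff] at hA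
  refine choi_injective ?_
  rw [map_zero, eq_zero_of_biquadForm_eq_zero (choi_mem_bisymmetricMatrices A) fun x y => by
    rw [hA, map_zero]]

theorem range_choiPoly [NeZero n] [NeZero m] {σ₁ : Measure (Fin n → ℝ)} {σ₂ : Measure (Fin m → ℝ)}
    (h₁ : IsSphereMeasure n σ₁) (h₂ : IsSphereMeasure m σ₂) :
    Set.range choiPoly = MSet n m 1 1 σ₁ σ₂ := by
  ext f
  constructor
  · rintro ⟨A, rfl⟩
    refine ⟨range_biquadPoly.subset ⟨choi A, rfl⟩, ?_⟩
    rw [choiPoly_apply, bavg_biquadPoly h₁ h₂, trace_choi, zero_div]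
  · rintro ⟨hf, hf₀⟩
    obtain ⟨M, hM, rfl⟩ := exists_mem_bisymmetricMatrices_biquadPoly_eq hf
    rw [bavg_biquadPoly h₁ h₂, div_eq_zero_iff] at hf₀
    have htrace : M.trace = 0 := hf₀.resolve_right <|
      mul_ne_zero (Nat.cast_ne_zero.2 (NeZero.ne n)) (Nat.cast_ne_zero.2 (NeZero.ne m))
    exact ⟨⟨(euclideanToMatrix _).symm M, hM, htrace⟩, rfl⟩

theorem choiPoly_add_qpoly_mem_posSet (A : choiSpace (Fin n) (Fin m)) :
    choiPoly A + qpoly n m 1 1 ∈ PosSet n m 1 1 ↔ A ∈ posSection (Fin n) (Fin m) := by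
  rw [choiPoly_add_qpoly]
  refine ⟨fun h x y => ?_, fun h => ⟨range_biquadPoly.subset ⟨_, rfl⟩, fun x y => ?_⟩⟩
  · rw [← WithLp.toLp_ofLp 2 x, ← WithLp.toLp_ofLp 2 y, ← beval_biquadPoly]
    exact h.2 _ _
  · rw [beval_biquadPoly]
    exact h _ _

theorem choiPoly_add_qpoly_mem_sqSet (A : choiSpace (Fin n) (Fin m)) :
    choiPoly A + qpoly n m 1 1 ∈ SqSet n m 1 1 ↔ A ∈ sosSection (Fin n) (Fin m) := by
  simp only [choiPoly_add_qpoly, mem_sqSet_iff, biquadPoly_eq_iff, sosSection, Set.mem_ofPred_eq]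

theorem choiPoly_preimage_tilde {σ₁ : Measure (Fin n → ℝ)} {σ₂ : Measure (Fin m → ℝ)}
    (h : Set.range choiPoly = MSet n m 1 1 σ₁ σ₂) (K : Set (MvPolynomial (Fin n ⊕ Fin m) ℝ)) :
    choiPoly ⁻¹' tilde n m 1 1 σ₁ σ₂ K = {A | choiPoly A + qpoly n m 1 1 ∈ K} :=
  Set.ext fun A => and_iff_right (h.subset ⟨A, rfl⟩)

variable {D : ℕ} {σ₁ : Measure (Fin n → ℝ)} {σ₂ : Measure (Fin m → ℝ)}
  {ψ : (Fin D → ℝ) →ₗ[ℝ] MvPolynomial (Fin n ⊕ Fin m) ℝ}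

theorem exists_isAddHaarMeasure_sections [NeZero n] [NeZero m] (h₁ : IsSphereMeasure n σ₁)
    (h₂ : IsSphereMeasure m σ₂) (hψ : Function.Injective ψ)
    (hrange : Set.range ψ = MSet n m 1 1 σ₁ σ₂) :
    Module.finrank ℝ (choiSpace (Fin n) (Fin m)) = D ∧
      ∃ ν : Measure (choiSpace (Fin n) (Fin m)), ν.IsAddHaarMeasure ∧
        volume (ψ ⁻¹' tilde n m 1 1 σ₁ σ₂ (SqSet n m 1 1)) = ν (sosSection (Fin n) (Fin m)) ∧
        volume (ψ ⁻¹' tilde n m 1 1 σ₁ σ₂ (PosSet n m 1 1)) = ν (posSection (Fin n) (Fin m)) := by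
  have hchoi := range_choiPoly h₁ h₂
  obtain ⟨hdim, ν, hν, hpre⟩ := exists_isAddHaarMeasure_measure_preimage_eq hψ choiPoly_injective
    (hrange.trans hchoi.symm) volume
  refine ⟨by rw [← hdim, Module.finrank_fin_fun], ν, hν, ?_, ?_⟩
  · simp only [hpre, choiPoly_preimage_tilde hchoi, choiPoly_add_qpoly_mem_sqSet, Set.ofPred_mem_eq]
  · simp only [hpre, choiPoly_preimage_tilde hchoi, choiPoly_add_qpoly_mem_posSet,
      Set.ofPred_mem_eq]

end ChoiPoly

section RadiusComparison

variable {a b V : ENNReal} {D : ℕ} {p q c : ℝ}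

theorem four_mul_pow_lt_pow (hD : 35 ≤ D) (hp : 0 < p) (hpq : 1.05 * p ≤ q) :
    4 * p ^ D < q ^ D := calc
  4 * p ^ D < 1.05 ^ D * p ^ D := by
    gcongr
    calc (4 : ℝ) < 1.05 ^ 35 := by norm_num
      _ ≤ 1.05 ^ D := pow_le_pow_right₀ (by norm_num) hD
  _ = (1.05 * p) ^ D := (mul_pow _ _ _).symm
  _ ≤ q ^ D := by gcongr

theorem four_mul_ofReal_pow_mul_lt (hV₀ : V ≠ 0) (hV : V ≠ ⊤) (hp : 0 ≤ p) (hq : 0 ≤ q)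
    (h : 4 * p ^ D < q ^ D) : 4 * (ENNReal.ofReal p ^ D * V) < ENNReal.ofReal q ^ D * V := by
  rw [← mul_assoc]
  refine ENNReal.mul_lt_mul_left hV₀ hV ?_
  rw [← ENNReal.ofReal_pow hp, ← ENNReal.ofReal_pow hq,
    ← ENNReal.ofReal_ofNat 4, ← ENNReal.ofReal_mul (by norm_num)]
  exact (ENNReal.ofReal_lt_ofReal_iff_of_nonneg (by positivity)).2 h

theorem div_lt_ofReal_pow (hV₀ : V ≠ 0) (hV : V ≠ ⊤) (hp : 0 ≤ p) (hq : 0 < q) (hc : 0 ≤ c)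
    (h : 4 * p ^ D < (c * q) ^ D) (ha : a ≤ 2 * (ENNReal.ofReal p ^ D * V))
    (hb : ENNReal.ofReal q ^ D * V ≤ 2 * b) : a / b < ENNReal.ofReal c ^ D := by
  have hb₀ : b ≠ 0 := by
    rintro rfl
    refine mul_ne_zero (pow_ne_zero D (ENNReal.ofReal_pos.2 hq).ne') hV₀ ?_
    simpa only [mul_zero, nonpos_iff_eq_zero] using hb
  have ha' : a ≠ ⊤ := ne_top_of_le_ne_top (by finiteness) ha
  rw [ENNReal.div_lt_iff (.inl hb₀) (.inr ha')]
  have hradii := four_mul_ofReal_pow_mul_lt hV₀ hV hp (by positivity) h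
  contrapose! hradii
  calc ENNReal.ofReal (c * q) ^ D * V
      = ENNReal.ofReal c ^ D * (ENNReal.ofReal q ^ D * V) := by
        rw [ENNReal.ofReal_mul hc, mul_pow, mul_assoc]
    _ ≤ ENNReal.ofReal c ^ D * (2 * b) := by gcongr
    _ = 2 * (ENNReal.ofReal c ^ D * b) := by ring
    _ ≤ 2 * (2 * (ENNReal.ofReal p ^ D * V)) := mul_le_mul_right (hradii.trans ha) 2
    _ = 4 * (ENNReal.ofReal p ^ D * V) := by ring

theorem ofReal_pow_lt_div (hV₀ : V ≠ 0) (hV : V ≠ ⊤) (hp : 0 ≤ p) (hq : 0 ≤ q) (hc : 0 ≤ c)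
    (h : 4 * (c * p) ^ D < q ^ D) (ha : ENNReal.ofReal q ^ D * V ≤ 2 * a)
    (hb : b ≤ 2 * (ENNReal.ofReal p ^ D * V)) : ENNReal.ofReal c ^ D < a / b := by
  have hb' : b ≠ ⊤ := ne_top_of_le_ne_top (by finiteness) hb
  rw [ENNReal.lt_div_iff_mul_lt (.inr (by finiteness)) (.inl hb')]
  have hradii := four_mul_ofReal_pow_mul_lt hV₀ hV (mul_nonneg hc hp) hq h
  contrapose! hradii
  calc ENNReal.ofReal q ^ D * V ≤ 2 * a := ha
    _ ≤ 2 * (ENNReal.ofReal c ^ D * b) := by gcongr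
    _ ≤ 2 * (ENNReal.ofReal c ^ D * (2 * (ENNReal.ofReal p ^ D * V))) := by gcongr
    _ = 4 * (ENNReal.ofReal (c * p) ^ D * V) := by
      rw [ENNReal.ofReal_mul hc, mul_pow]
      ring

theorem two_pow_mul_ofReal_pow_le {k : ℕ} (hk : k ≤ 4 * D) (hpq : 16 * p ≤ q) :
    2 * 2 ^ k * (ENNReal.ofReal p ^ D * V) ≤ 2 * (ENNReal.ofReal q ^ D * V) := calc
  2 * 2 ^ k * (ENNReal.ofReal p ^ D * V)
      ≤ 2 * 2 ^ (4 * D) * (ENNReal.ofReal p ^ D * V) := by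
    gcongr
    norm_num
  _ = 2 * ((16 * ENNReal.ofReal p) ^ D * V) := by
    rw [pow_mul, mul_pow]
    norm_num
    ring
  _ = 2 * (ENNReal.ofReal (16 * p) ^ D * V) := by
    rw [ENNReal.ofReal_mul (by norm_num), ENNReal.ofReal_ofNat]
  _ ≤ 2 * (ENNReal.ofReal q ^ D * V) := by gcongr

end RadiusComparison

section SlabWidths

theorem four_mul_pow_le_exp {k : ℕ} (hk : 3 ≤ k) : 4 * (81 : ℝ) ^ k ≤ Real.exp (5 * k) := by
  have hexp : (148 : ℝ) ≤ Real.exp 5 := calc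
    (148 : ℝ) ≤ 2.7182818283 ^ 5 := by norm_num
    _ ≤ Real.exp 1 ^ 5 := by gcongr; exact Real.exp_one_gt_d9.le
    _ = Real.exp 5 := by rw [Real.exp_one_pow]; norm_num
  calc 4 * (81 : ℝ) ^ k ≤ 148 ^ k := by
        induction k, hk using Nat.le_induction with
        | base => norm_num
        | succ k _ ih =>
          rw [pow_succ, pow_succ]
          linarith [pow_pos (show (0 : ℝ) < 81 by norm_num) k]
    _ ≤ Real.exp 5 ^ k := by gcongr
    _ = Real.exp (5 * k) := by rw [mul_comm, Real.exp_nat_mul]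

theorem four_mul_sq_mul_pow_le_exp {a b : ℕ} (hab : a ≤ b) (hb : 3 ≤ b) :
    4 * ((a : ℝ) ^ 2 * 81 ^ b) ≤ Real.exp (6 * b) := by
  have hexp : (324 : ℝ) ≤ Real.exp 6 := calc
    (324 : ℝ) ≤ 2.7182818283 ^ 6 := by norm_num
    _ ≤ Real.exp 1 ^ 6 := by gcongr; exact Real.exp_one_gt_d9.le
    _ = Real.exp 6 := by rw [Real.exp_one_pow]; norm_num
  have hsq : 4 * a ^ 2 ≤ 4 ^ b := calc
    4 * a ^ 2 ≤ 4 * b ^ 2 := by gcongr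
    _ ≤ 4 ^ b := by
      clear hab
      induction b, hb using Nat.le_induction with
      | base => norm_num
      | succ k hk ih =>
        rw [pow_succ 4]
        nlinarith
  calc 4 * ((a : ℝ) ^ 2 * 81 ^ b) = (4 * (a : ℝ) ^ 2) * 81 ^ b := by ring
    _ ≤ 4 ^ b * 81 ^ b := by gcongr; exact_mod_cast hsq
    _ = 324 ^ b := by rw [← mul_pow]; norm_num
    _ ≤ Real.exp 6 ^ b := by gcongr
    _ = Real.exp (6 * b) := by rw [mul_comm, Real.exp_nat_mul]

end SlabWidths

section SectionVolumes

open Metric Fintype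

variable {ι κ : Type*} [Fintype ι] [Fintype κ] [DecidableEq ι] [DecidableEq κ]
  [MeasurableSpace (choiSpace ι κ)] [BorelSpace (choiSpace ι κ)] (ν : Measure (choiSpace ι κ))
  [ν.IsAddHaarMeasure]

theorem measure_sosSection_le_sqrt (hcard : 3 ≤ card ι * card κ)
    (hdim : (card ι * card κ) ^ 2 ≤ 4 * Module.finrank ℝ (choiSpace ι κ)) :
    ν (sosSection ι κ) ≤ 2 * (ENNReal.ofReal (360 * √(card ι * card κ)) ^
      Module.finrank ℝ (choiSpace ι κ) * ν (closedBall 0 1)) := by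
  have hne : Nonempty (ι × κ) := card_pos_iff.1 (by rw [card_prod]; omega)
  obtain ⟨_, _⟩ := nonempty_prod.1 hne
  have hN : (0 : ℝ) < card ι * card κ := by positivity
  have hs := Real.sq_sqrt hN.le
  refine (measure_sosSection_le ν (t := √10 / √(card ι * card κ)) (by positivity) ?_).trans
    (two_pow_mul_ofReal_pow_le hdim ?_)
  · refine (four_mul_pow_le_exp hcard).trans_eq (congrArg Real.exp ?_)
    rw [div_pow, hs, Real.sq_sqrt (by norm_num)]
    push_cast
    field_simp
    norm_num
  · have h10 : √10 ≤ 3.1625 := Real.sqrt_le_iff.2 (by norm_num)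
    calc 16 * (64 / 9 * ((card ι : ℝ) * card κ) * (√10 / √(card ι * card κ)))
        = 1024 / 9 * √10 * √(card ι * card κ) := by
          field_simp
          rw [hs]
          ring
      _ ≤ 360 * √(card ι * card κ) := by
          gcongr
          linarith

theorem sqrt_pow_mul_le_measure_sosSection (hcard : 3 ≤ card ι * card κ)
    (hdim : (card ι * card κ) ^ 2 ≤ 4 * Module.finrank ℝ (choiSpace ι κ)) :
    ENNReal.ofReal (√(card ι * card κ) / 11.25) ^ Module.finrank ℝ (choiSpace ι κ) *
      ν (closedBall 0 1) ≤ 2 * ν (sosSection ι κ) := by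
  have hN : (0 : ℝ) < card ι * card κ := by exact_mod_cast (by omega : 0 < card ι * card κ)
  have hs := Real.sq_sqrt hN.le
  refine le_trans ?_ (ofReal_pow_mul_measure_closedBall_le_sosSection ν
    (t := √40 / √(card ι * card κ)) (by positivity) ?_)
  · have h40 : √40 ≤ 6.325 := Real.sqrt_le_iff.2 (by norm_num)
    gcongr ENNReal.ofReal ?_ ^ _ * _
    rw [div_le_div_iff₀ (by norm_num) (by positivity)]
    field_simp
    linarith
  · refine (four_mul_pow_le_exp hcard).trans (Real.exp_le_exp.2 ?_)
    have hdim' : ((card ι : ℝ) * card κ) ^ 2 ≤ 4 * Module.finrank ℝ (choiSpace ι κ) := by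
      exact_mod_cast hdim
    rw [div_pow, hs, Real.sq_sqrt (by norm_num), Nat.cast_mul, le_div_iff₀ (by norm_num),
      mul_div_assoc', le_div_iff₀ hN]
    linarith

theorem div_sqrt_pow_mul_le_measure_posSection [Nonempty ι] [Nonempty κ]
    (hcard : 3 ≤ card ι + card κ)
    (hdim : (card ι * card κ) ^ 2 ≤ 4 * Module.finrank ℝ (choiSpace ι κ)) :
    ENNReal.ofReal (card ι * card κ / (20 * √(card ι + card κ))) ^
      Module.finrank ℝ (choiSpace ι κ) * ν (closedBall 0 1) ≤ 2 * ν (posSection ι κ) := by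
  have hS : (0 : ℝ) < card ι + card κ := by positivity
  have hs := Real.sq_sqrt hS.le
  refine le_trans ?_ (ofReal_pow_mul_measure_closedBall_le_posSection ν
    (t := √40 * √(card ι + card κ) / (card ι * card κ)) (by positivity) ?_)
  · have h40 : √40 ≤ 6.325 := Real.sqrt_le_iff.2 (by norm_num)
    gcongr ENNReal.ofReal ?_ ^ _ * _
    rw [div_le_div_iff₀ (by positivity) (by positivity)]
    field_simp
    linarith
  · refine (four_mul_pow_le_exp hcard).trans (Real.exp_le_exp.2 ?_)
    have hdim' : ((card ι : ℝ) * card κ) ^ 2 ≤ 4 * Module.finrank ℝ (choiSpace ι κ) := by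
      exact_mod_cast hdim
    rw [div_pow, mul_pow √40, hs, Real.sq_sqrt (by norm_num), Nat.cast_add,
      le_div_iff₀ (by norm_num), mul_div_assoc', le_div_iff₀ (by positivity)]
    nlinarith

theorem four_mul_sq_mul_pow_le_exp_width {a b : ℕ} (ha : 0 < a) (hab : a ≤ b) (hb : 3 ≤ b) :
    4 * ((a : ℝ) ^ 2 * 81 ^ b) ≤
      Real.exp ((a ^ 2 * b ^ 2 : ℕ) * (√12 / (a * √b)) ^ 2 / 2) := by
  refine (four_mul_sq_mul_pow_le_exp hab hb).trans_eq (congrArg Real.exp ?_)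
  rw [div_pow, mul_pow, Real.sq_sqrt (Nat.cast_nonneg b), Real.sq_sqrt (by norm_num)]
  push_cast
  field_simp
  norm_num

theorem sixteen_mul_width_le {a b : ℕ} (ha : 0 < a) (hb : 0 < b) :
    16 * (64 / 9 * ((a : ℝ) ^ 2 * b) * (√12 / (a * √b))) ≤ 400 * (a * √b) := by
  have h12 : √12 ≤ 3.4642 := Real.sqrt_le_iff.2 (by norm_num)
  calc 16 * (64 / 9 * ((a : ℝ) ^ 2 * b) * (√12 / (a * √b))) = 1024 / 9 * √12 * (a * √b) := by
        field_simp
        rw [Real.sq_sqrt (Nat.cast_nonneg b)]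
        ring
    _ ≤ 400 * (a * √b) := by
        gcongr
        linarith

theorem measure_posSection_le_min_mul_sqrt_max [Nonempty ι] [Nonempty κ]
    (hcard : 3 ≤ max (card ι) (card κ))
    (hdim : (card ι * card κ) ^ 2 ≤ 4 * Module.finrank ℝ (choiSpace ι κ)) :
    ν (posSection ι κ) ≤ 2 * (ENNReal.ofReal
      (400 * ((min (card ι) (card κ) : ℕ) * √(max (card ι) (card κ) : ℕ))) ^
        Module.finrank ℝ (choiSpace ι κ) * ν (closedBall 0 1)) := by
  have hι : 0 < card ι := card_pos
  have hκ : 0 < card κ := card_pos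
  rcases le_total (card ι) (card κ) with h | h
  · rw [max_eq_right h] at hcard ⊢
    rw [min_eq_left h]
    exact (measure_posSection_le_left ν (by positivity)
      (four_mul_sq_mul_pow_le_exp_width hι h hcard)).trans
      (two_pow_mul_ofReal_pow_le (by rwa [← mul_pow]) (sixteen_mul_width_le hι hκ))
  · rw [max_eq_left h] at hcard ⊢
    rw [min_eq_right h]
    exact (measure_posSection_le_right ν (by positivity)
      (four_mul_sq_mul_pow_le_exp_width hκ h hcard)).trans
      (two_pow_mul_ofReal_pow_le (by rwa [← mul_pow, mul_comm]) (sixteen_mul_width_le hκ hι))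

end SectionVolumes

section Dimension

variable {n m D : ℕ}

theorem two_mul_choose_succ_two (k : ℕ) : 2 * (k + 1).choose 2 = (k + 1) * k := by
  rw [Nat.choose_two_right, Nat.add_sub_cancel]
  exact Nat.mul_div_cancel' (mul_comm k (k + 1) ▸ (Nat.even_mul_succ_self k).two_dvd)

theorem four_mul_dim_add_one (hn : 1 ≤ n) (hm : 1 ≤ m)
    (hD : D = (n + 1).choose 2 * (m + 1).choose 2 - 1) :
    4 * (D + 1) = ((n + 1) * n) * ((m + 1) * m) := by
  have hpos : 0 < (n + 1).choose 2 * (m + 1).choose 2 :=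
    Nat.mul_pos (Nat.choose_pos (by omega)) (Nat.choose_pos (by omega))
  rw [hD, Nat.sub_add_cancel hpos, ← two_mul_choose_succ_two, ← two_mul_choose_succ_two]
  ring

theorem thirty_five_le_dim (hn : 3 ≤ n) (hm : 3 ≤ m)
    (hD : D = (n + 1).choose 2 * (m + 1).choose 2 - 1) : 35 ≤ D := by
  have hdim := four_mul_dim_add_one (by omega) (by omega) hD
  have : (3 + 1) * 3 * ((3 + 1) * 3) ≤ (n + 1) * n * ((m + 1) * m) := by gcongr
  omega

theorem sq_mul_le_four_mul_dim (hn : 2 ≤ n) (hm : 2 ≤ m)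
    (hD : D = (n + 1).choose 2 * (m + 1).choose 2 - 1) : (n * m) ^ 2 ≤ 4 * D := by
  have hdim := four_mul_dim_add_one (by omega) (by omega) hD
  have : 2 * 2 * (2 + 2 + 1) ≤ n * m * (n + m + 1) := by gcongr
  linarith

theorem max_le_dim (hn : 2 ≤ n) (hm : 2 ≤ m)
    (hD : D = (n + 1).choose 2 * (m + 1).choose 2 - 1) : max n m ≤ D := by
  have hdim := four_mul_dim_add_one (by omega) (by omega) hD
  have hn' : (n + 1) * 2 * ((2 + 1) * 2) ≤ (n + 1) * n * ((m + 1) * m) := by gcongr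
  have hm' : (2 + 1) * 2 * ((m + 1) * 2) ≤ (n + 1) * n * ((m + 1) * m) := by gcongr
  omega

end Dimension

section Constants

variable {k C M K : ℝ}

theorem sqrt_mul_sqrt_le (hk : 3 ≤ k) (hkM : k ≤ M) :
    √(k + 1) * √(k + M) ≤ 1.64 * √(k * M) := by
  have hM : 3 ≤ M := hk.trans hkM
  rw [← Real.sqrt_mul (by positivity)]
  refine Real.sqrt_le_iff.2 ⟨by positivity, ?_⟩
  rw [mul_pow, Real.sq_sqrt (by positivity)]
  nlinarith [mul_nonneg (sub_nonneg.2 hk) (sub_nonneg.2 hM)]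

theorem sos_upper_radius_le (hk : 3 ≤ k) (hkM : k ≤ M) (hK : 334800 ≤ K) :
    1.05 * (360 * √(k * M)) ≤ K / (3 ^ 3 * √(k + 1)) * (k * M / (20 * √(k + M))) := by
  have hM : 3 ≤ M := hk.trans hkM
  rw [div_mul_div_comm, le_div_iff₀ (by positivity)]
  calc 1.05 * (360 * √(k * M)) * (3 ^ 3 * √(k + 1) * (20 * √(k + M)))
      = 204120 * √(k * M) * (√(k + 1) * √(k + M)) := by ring
    _ ≤ 204120 * √(k * M) * (1.64 * √(k * M)) :=
        mul_le_mul_of_nonneg_left (sqrt_mul_sqrt_le hk hkM) (by positivity)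
    _ = 334756.8 * √(k * M) ^ 2 := by ring
    _ ≤ K * √(k * M) ^ 2 := by
        gcongr
        linarith
    _ = K * (k * M) := by rw [Real.sq_sqrt (by positivity)]

theorem pos_upper_radius_le (hk : 0 < k) :
    1.05 * (3 * √3 / (2 ^ 10 * 7 ^ 2 * √k) * (400 * (k * √M))) ≤ √(k * M) / 11.25 := by
  have h3 : √3 ≤ 2 := Real.sqrt_le_iff.2 (by norm_num)
  calc 1.05 * (3 * √3 / (2 ^ 10 * 7 ^ 2 * √k) * (400 * (k * √M)))
      = 1260 / 50176 * √3 * (√k * √M) := by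
        field_simp
        rw [Real.sq_sqrt hk.le]
        ring
    _ ≤ 1260 / 50176 * 2 * (√k * √M) := by gcongr
    _ ≤ 1 / 11.25 * (√k * √M) := by
        gcongr
        norm_num
    _ = √(k * M) / 11.25 := by
        rw [Real.sqrt_mul hk.le]
        ring

theorem upper_constant_ge : 334800 ≤ (2 : ℝ) ^ (12 : ℕ) * (5 : ℝ) ^ 2 *
    (6 : ℝ) ^ ((1 : ℝ) / 2) * (10 : ℝ) ^ ((2 : ℝ) / 9) := by
  have h6 : (2.4 : ℝ) ≤ 6 ^ ((1 : ℝ) / 2) := by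
    rw [← Real.sqrt_eq_rpow]
    exact Real.le_sqrt_of_sq_le (by norm_num)
  have h10 : (1.6 : ℝ) ≤ 10 ^ ((2 : ℝ) / 9) := by
    rw [← pow_le_pow_iff_left₀ (by norm_num) (by positivity) (n := 9) (by norm_num),
      ← Real.rpow_mul_natCast (by norm_num)]
    norm_num
  calc (334800 : ℝ) ≤ 2 ^ (12 : ℕ) * 5 ^ 2 * 2.4 * 1.6 := by norm_num
    _ ≤ _ := by gcongr

theorem upper_constant_sq : ((2 : ℝ) ^ (12 : ℕ) * (5 : ℝ) ^ 2 * (6 : ℝ) ^ ((1 : ℝ) / 2) *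
      (10 : ℝ) ^ ((2 : ℝ) / 9) / 3 ^ 3) ^ 2 =
    (2 : ℝ) ^ (25 : ℕ) * (5 : ℝ) ^ 4 * (10 : ℝ) ^ ((4 : ℝ) / 9) / (3 : ℝ) ^ 5 := by
  have h6 : ((6 : ℝ) ^ ((1 : ℝ) / 2)) ^ 2 = 6 := by
    rw [← Real.rpow_mul_natCast (by norm_num)]
    norm_num
  have h10 : ((10 : ℝ) ^ ((2 : ℝ) / 9)) ^ 2 = 10 ^ ((4 : ℝ) / 9) := by
    rw [← Real.rpow_mul_natCast (by norm_num)]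
    norm_num
  rw [div_pow, mul_pow, mul_pow, h6, h10]
  ring

theorem upper_constant_le_sqrt (hC : C =
      (2 : ℝ) ^ (25 : ℕ) * (5 : ℝ) ^ 4 * (10 : ℝ) ^ ((4 : ℝ) / 9) / (3 : ℝ) ^ 5)
    (hk : C ≤ k) :
    (2 : ℝ) ^ (12 : ℕ) * (5 : ℝ) ^ 2 * (6 : ℝ) ^ ((1 : ℝ) / 2) * (10 : ℝ) ^ ((2 : ℝ) / 9) /
      ((3 : ℝ) ^ 3 * √(k + 1)) ≤ √(C / (C + 1)) := by
  have hC₀ : 0 < C := hC ▸ by positivity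
  have hk₀ : 0 ≤ k := by linarith
  refine Real.le_sqrt_of_sq_le ?_
  rw [← div_div, div_pow, upper_constant_sq, ← hC, Real.sq_sqrt (by positivity)]
  gcongr

end Constants

section Probability

variable {n m D : ℕ} {σ₁ : Measure (Fin n → ℝ)} {σ₂ : Measure (Fin m → ℝ)}
  {ψ : (Fin D → ℝ) →ₗ[ℝ] MvPolynomial (Fin n ⊕ Fin m) ℝ}

theorem probability_bounds (hn : 3 ≤ n) (hm : 3 ≤ m)
    (hD : D = Nat.choose (n + 1) 2 * Nat.choose (m + 1) 2 - 1)
    (h₁ : IsSphereMeasure n σ₁) (h₂ : IsSphereMeasure m σ₂)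
    (hψ : Function.Injective ψ) (hrange : Set.range ψ = MSet n m 1 1 σ₁ σ₂) :
    ENNReal.ofReal (3 * √3 / ((2 : ℝ) ^ (10 : ℕ) * (7 : ℝ) ^ 2 * √((min n m : ℕ) : ℝ))) ^ D <
        volume (⇑ψ ⁻¹' tilde n m 1 1 σ₁ σ₂ (SqSet n m 1 1)) /
          volume (⇑ψ ⁻¹' tilde n m 1 1 σ₁ σ₂ (PosSet n m 1 1)) ∧
      volume (⇑ψ ⁻¹' tilde n m 1 1 σ₁ σ₂ (SqSet n m 1 1)) /
          volume (⇑ψ ⁻¹' tilde n m 1 1 σ₁ σ₂ (PosSet n m 1 1)) <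
        ENNReal.ofReal ((2 : ℝ) ^ (12 : ℕ) * (5 : ℝ) ^ 2 * (6 : ℝ) ^ ((1 : ℝ) / 2) *
            (10 : ℝ) ^ ((2 : ℝ) / 9) / ((3 : ℝ) ^ 3 * √(((min n m : ℕ) : ℝ) + 1))) ^ D := by
  have : NeZero n := ⟨by omega⟩
  have : NeZero m := ⟨by omega⟩
  obtain ⟨hfinrank, ν, hν, hsos, hpos⟩ := exists_isAddHaarMeasure_sections h₁ h₂ hψ hrange
  have hD₃₅ := thirty_five_le_dim hn hm hD
  have hdim := sq_mul_le_four_mul_dim (by omega) (by omega) hD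
  rw [hsos, hpos]
  have hV₀ : ν (Metric.closedBall 0 1) ≠ 0 := (Metric.measure_closedBall_pos ν _ one_pos).ne'
  have hV : ν (Metric.closedBall 0 1) ≠ ⊤ := measure_closedBall_lt_top.ne
  have hk : (3 : ℝ) ≤ (min n m : ℕ) := by exact_mod_cast le_min hn hm
  have hkM : ((min n m : ℕ) : ℝ) ≤ (max n m : ℕ) := by exact_mod_cast min_le_max
  have hk₀ : (0 : ℝ) < (min n m : ℕ) := by linarith
  have : (0 : ℝ) < (max n m : ℕ) := by linarith
  have hmul : (n : ℝ) * m = (min n m : ℕ) * (max n m : ℕ) := by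
    exact_mod_cast (min_mul_max n m).symm
  have hadd : (n : ℝ) + m = (min n m : ℕ) + (max n m : ℕ) := by
    exact_mod_cast (min_add_max n m).symm
  have hsos_le := measure_sosSection_le_sqrt ν
  have hle_sos := sqrt_pow_mul_le_measure_sosSection ν
  have hpos_le := measure_posSection_le_min_mul_sqrt_max ν
  have hle_pos := div_sqrt_pow_mul_le_measure_posSection ν
  simp only [Fintype.card_fin, hfinrank, hmul, hadd] at hsos_le hle_sos hpos_le hle_pos
  have hnm : 3 ≤ n * m := hn.trans (Nat.le_mul_of_pos_right n (by omega))
  exact ⟨ofReal_pow_lt_div hV₀ hV (by positivity) (by positivity) (by positivity)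
      (four_mul_pow_lt_pow hD₃₅ (by positivity) (pos_upper_radius_le hk₀))
      (hle_sos hnm hdim) (hpos_le (hn.trans (le_max_left n m)) hdim),
    div_lt_ofReal_pow hV₀ hV (by positivity) (by positivity) (by positivity)
      (four_mul_pow_lt_pow hD₃₅ (by positivity) (sos_upper_radius_le hk hkM upper_constant_ge))
      (hsos_le hnm hdim) (hle_pos (by omega) hdim)⟩

end Probability

theorem statement5_general :
    (∀ n m : ℕ, 3 ≤ n → 3 ≤ m → ∀ D : ℕ,
      D = Nat.choose (n + 1) 2 * Nat.choose (m + 1) 2 - 1 →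
      ∀ (σ₁ : Measure (Fin n → ℝ)) (σ₂ : Measure (Fin m → ℝ)),
        IsSphereMeasure n σ₁ → IsSphereMeasure m σ₂ →
      ∀ ψ : (Fin D → ℝ) →ₗ[ℝ] MvPolynomial (Fin n ⊕ Fin m) ℝ,
        Function.Injective ψ → Set.range ψ = MSet n m 1 1 σ₁ σ₂ →
      ENNReal.ofReal (3 * Real.sqrt 3 /
            ((2 : ℝ) ^ (10 : ℕ) * (7 : ℝ) ^ 2 * Real.sqrt ((min n m : ℕ) : ℝ))) ^ D <
        volume (⇑ψ ⁻¹' tilde n m 1 1 σ₁ σ₂ (SqSet n m 1 1)) /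
          volume (⇑ψ ⁻¹' tilde n m 1 1 σ₁ σ₂ (PosSet n m 1 1)) ∧
      volume (⇑ψ ⁻¹' tilde n m 1 1 σ₁ σ₂ (SqSet n m 1 1)) /
          volume (⇑ψ ⁻¹' tilde n m 1 1 σ₁ σ₂ (PosSet n m 1 1)) <
        ENNReal.ofReal ((2 : ℝ) ^ (12 : ℕ) * (5 : ℝ) ^ 2 * (6 : ℝ) ^ ((1 : ℝ) / 2) *
            (10 : ℝ) ^ ((2 : ℝ) / 9) /
          ((3 : ℝ) ^ 3 * Real.sqrt (((min n m : ℕ) : ℝ) + 1))) ^ D) ∧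
    (∀ ε : ℝ, 0 < ε → ∃ N : ℕ, ∀ n m : ℕ, 3 ≤ n → 3 ≤ m →
      (2 : ℝ) ^ (25 : ℕ) * (5 : ℝ) ^ 4 * (10 : ℝ) ^ ((4 : ℝ) / 9) / (3 : ℝ) ^ 5 ≤
        ((min n m : ℕ) : ℝ) →
      N ≤ max n m →
      ∀ D : ℕ, D = Nat.choose (n + 1) 2 * Nat.choose (m + 1) 2 - 1 →
      ∀ (σ₁ : Measure (Fin n → ℝ)) (σ₂ : Measure (Fin m → ℝ)),
        IsSphereMeasure n σ₁ → IsSphereMeasure m σ₂ →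
      ∀ ψ : (Fin D → ℝ) →ₗ[ℝ] MvPolynomial (Fin n ⊕ Fin m) ℝ,
        Function.Injective ψ → Set.range ψ = MSet n m 1 1 σ₁ σ₂ →
      volume (⇑ψ ⁻¹' tilde n m 1 1 σ₁ σ₂ (SqSet n m 1 1)) /
          volume (⇑ψ ⁻¹' tilde n m 1 1 σ₁ σ₂ (PosSet n m 1 1)) < ENNReal.ofReal ε) := by
  refine ⟨fun n m hn hm D hD σ₁ σ₂ h₁ h₂ ψ hψ hrange =>
    probability_bounds hn hm hD h₁ h₂ hψ hrange, fun ε hε => ?_⟩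
  set C : ℝ := (2 : ℝ) ^ (25 : ℕ) * (5 : ℝ) ^ 4 * (10 : ℝ) ^ ((4 : ℝ) / 9) / (3 : ℝ) ^ 5 with hC
  have : 0 < C := by positivity
  have hbase : √(C / (C + 1)) < 1 := by
    rw [Real.sqrt_lt' one_pos, one_pow, div_lt_one (by positivity)]
    exact lt_add_one C
  obtain ⟨N, hN⟩ := exists_pow_lt_of_lt_one hε hbase
  refine ⟨N, fun n m hn hm hmin hmax D hD σ₁ σ₂ h₁ h₂ ψ hψ hrange =>
    (probability_bounds hn hm hD h₁ h₂ hψ hrange).2.trans_le ?_⟩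
  have hND : N ≤ D := hmax.trans (max_le_dim (by omega) (by omega) hD)
  rw [← ENNReal.ofReal_pow (by positivity)]
  refine ENNReal.ofReal_le_ofReal ?_
  calc _ ≤ √(C / (C + 1)) ^ D := by
        gcongr
        exact upper_constant_le_sqrt hC hmin
    _ ≤ √(C / (C + 1)) ^ N := pow_le_pow_of_le_one (Real.sqrt_nonneg _) hbase.le hND
    _ ≤ ε := hN.le

end BiformPaper

open BiformPaper in
/-- **Corollary (probability that a positive map `Φ : 𝕊_n → 𝕊_m` is completely positive).**
The probability `p_{n,m} = Vol S̃q / Vol P̃os` satisfies, for `n, m ≥ 3`,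
`(3√3/(2^{10}·7²·√(min(n,m))))^{D_𝓜} < p_{n,m} < (2^{12}·5²·6^{1/2}·10^{2/9}/(3³·√(min(n,m)+1)))^{D_𝓜}`
with `D_𝓜 = C(n+1,2)·C(m+1,2) − 1`; moreover, if `min(n,m) ≥ 2^{25}·5⁴·10^{4/9}/3⁵`
then `p_{n,m} → 0` as `max(n,m) → ∞`. -/
theorem statement5 :
    (∀ n m : ℕ, 3 ≤ n → 3 ≤ m → ∀ D : ℕ,
      D = Nat.choose (n + 1) 2 * Nat.choose (m + 1) 2 - 1 →
      ∀ (σ₁ : Measure (Fin n → ℝ)) (σ₂ : Measure (Fin m → ℝ)),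
        IsSphereMeasure n σ₁ → IsSphereMeasure m σ₂ →
      ∀ ψ : (Fin D → ℝ) →ₗ[ℝ] MvPolynomial (Fin n ⊕ Fin m) ℝ,
        IsUnitaryParam n m D σ₁ σ₂ (MSet n m 1 1 σ₁ σ₂) ψ →
      ENNReal.ofReal (3 * Real.sqrt 3 /
            ((2 : ℝ) ^ (10 : ℕ) * (7 : ℝ) ^ 2 * Real.sqrt ((min n m : ℕ) : ℝ))) ^ D <
        volume (⇑ψ ⁻¹' tilde n m 1 1 σ₁ σ₂ (SqSet n m 1 1)) /
          volume (⇑ψ ⁻¹' tilde n m 1 1 σ₁ σ₂ (PosSet n m 1 1)) ∧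
      volume (⇑ψ ⁻¹' tilde n m 1 1 σ₁ σ₂ (SqSet n m 1 1)) /
          volume (⇑ψ ⁻¹' tilde n m 1 1 σ₁ σ₂ (PosSet n m 1 1)) <
        ENNReal.ofReal ((2 : ℝ) ^ (12 : ℕ) * (5 : ℝ) ^ 2 * (6 : ℝ) ^ ((1 : ℝ) / 2) *
            (10 : ℝ) ^ ((2 : ℝ) / 9) /
          ((3 : ℝ) ^ 3 * Real.sqrt (((min n m : ℕ) : ℝ) + 1))) ^ D) ∧
    -- in particular, `p_{n,m} → 0` as `max(n,m) → ∞` whenever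
    -- `min(n,m) ≥ 2^{25}·5⁴·10^{4/9}/3⁵`:
    (∀ ε : ℝ, 0 < ε → ∃ N : ℕ, ∀ n m : ℕ, 3 ≤ n → 3 ≤ m →
      (2 : ℝ) ^ (25 : ℕ) * (5 : ℝ) ^ 4 * (10 : ℝ) ^ ((4 : ℝ) / 9) / (3 : ℝ) ^ 5 ≤
        ((min n m : ℕ) : ℝ) →
      N ≤ max n m →
      ∀ D : ℕ, D = Nat.choose (n + 1) 2 * Nat.choose (m + 1) 2 - 1 →
      ∀ (σ₁ : Measure (Fin n → ℝ)) (σ₂ : Measure (Fin m → ℝ)),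
        IsSphereMeasure n σ₁ → IsSphereMeasure m σ₂ →
      ∀ ψ : (Fin D → ℝ) →ₗ[ℝ] MvPolynomial (Fin n ⊕ Fin m) ℝ,
        IsUnitaryParam n m D σ₁ σ₂ (MSet n m 1 1 σ₁ σ₂) ψ →
      volume (⇑ψ ⁻¹' tilde n m 1 1 σ₁ σ₂ (SqSet n m 1 1)) /
          volume (⇑ψ ⁻¹' tilde n m 1 1 σ₁ σ₂ (PosSet n m 1 1)) < ENNReal.ofReal ε) := by
  exact ⟨fun n m hn hm D hD σ₁ σ₂ h₁ h₂ ψ hψ =>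
      statement5_general.1 n m hn hm D hD σ₁ σ₂ h₁ h₂ ψ hψ.inj hψ.range,
    fun ε hε => (statement5_general.2 ε hε).imp
      fun N hN n m hn hm hmin hmax D hD σ₁ σ₂ h₁ h₂ ψ hψ =>
        hN n m hn hm hmin hmax D hD σ₁ σ₂ h₁ h₂ ψ hψ.inj hψ.range⟩
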